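/- arXiv:2002.07735 — 2 statements merged into one kernel-verified Lean document; each statement's English description precedes it below -/
import Mathlib

section
/- For each κ ≥ 20 and integer ℓ₀ ≥ C(κ) there exist K = K(κ,ℓ₀) ≥ 100 and constants c₁ = c₁(κ,ℓ₀), c₂ = c₂(κ,ℓ₀) ∈ (0,1) such that for all integers L₀ ≥ C'(κ,ℓ₀): if the families F and H_n (n ≥ 1) satisfy (C1) and (C2) together with P[complement of F_{0,x}] ≤ c₁ for every x ∈ 𝕃₀ and P[complement of H_{n,x}] ≤ c₂·2^{−2^n} for every n ≥ 1 and x ∈ 𝕃_n, then P[𝒢_n⁰] ≥ 1 − 2^{−2^n} for every n ≥ 0, for either notion (i) or (ii) of admissibility in the definition of 𝒢_n⁰. -/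
open MeasureTheory ProbabilityTheory Filter Set

namespace GFFperc

noncomputable section

/-- The lattice `ℤ^d`. -/
abbrev V (d : ℕ) := Fin d → ℤ

/-- Nearest-neighbour adjacency on `ℤ^d`. -/
def adj {d : ℕ} (x y : V d) : Prop := (∑ i, (x i - y i).natAbs) = 1

/-- `ℓ∞` distance between two points. -/
def dinf {d : ℕ} (x y : V d) : ℕ := Finset.univ.sup fun i => (x i - y i).natAbs

/-- `A` and `B` are joined by a nearest-neighbour path contained in `S`. -/
def ConnIn {d : ℕ} (S A B : Set (V d)) : Prop :=
  ∃ (n : ℕ) (γ : ℕ → V d), γ 0 ∈ A ∧ γ n ∈ B ∧ (∀ k, k ≤ n → γ k ∈ S) ∧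
    ∀ k, k < n → adj (γ k) (γ (k + 1))

/-- A set is connected: any two of its points are joined inside it. -/
def IsConnSet {d : ℕ} (S : Set (V d)) : Prop := ∀ x ∈ S, ∀ y ∈ S, ConnIn S {x} {y}

/-- The connected component of `x` in `S`. -/
def comp {d : ℕ} (S : Set (V d)) (x : V d) : Set (V d) := {y | ConnIn S {x} {y}}

/-- Box of (real) radius `r` centered at `x`. -/
def boxAt {d : ℕ} (x : V d) (r : ℝ) : Set (V d) := {y | ∀ i, |(y i : ℝ) - (x i : ℝ)| ≤ r}

def box (d : ℕ) (r : ℝ) : Set (V d) := boxAt (0 : V d) r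

/-- Inner vertex boundary of the box of radius `r` centered at `x`. -/
def bdryAt {d : ℕ} (x : V d) (r : ℝ) : Set (V d) :=
  {y | y ∈ boxAt x r ∧ ∃ z, z ∉ boxAt x r ∧ adj y z}

def bdry (d : ℕ) (r : ℝ) : Set (V d) := bdryAt (0 : V d) r

/-- `A` is connected to infinity within `S`. -/
def ConnToInf {d : ℕ} (S A : Set (V d)) : Prop := ∀ R : ℕ, 1 ≤ R → ConnIn S A (bdry d R)

/-- The `ℓ∞`-diameter of `S` is at least `r`. -/
def diamGE {d : ℕ} (S : Set (V d)) (r : ℝ) : Prop := ∃ x ∈ S, ∃ y ∈ S, r ≤ (dinf x y : ℝ)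

def unitV (d : ℕ) (i : Fin d) : V d := fun j => if j = i then 1 else 0

/-- `k`-step transition probabilities of simple random walk on `ℤ^d`. -/
def srwP (d : ℕ) : ℕ → V d → V d → ℝ
  | 0, x, y => if x = y then 1 else 0
  | (k + 1), x, y =>
      (1 / (2 * d)) * ∑ i : Fin d, (srwP d k (x + unitV d i) y + srwP d k (x - unitV d i) y)

/-- Green function of simple random walk on `ℤ^d`. -/
def green (d : ℕ) (x y : V d) : ℝ := ∑' k : ℕ, srwP d k x y

/-- `ℓ`-step transition kernel of the lazy simple random walk on `ℤ^d`. -/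
def lazyP (d : ℕ) : ℕ → V d → V d → ℝ
  | 0, x, y => if x = y then 1 else 0
  | (k + 1), x, y =>
      (1 / 2) * lazyP d k x y +
        (1 / (4 * d)) * ∑ i : Fin d, (lazyP d k (x + unitV d i) y + lazyP d k (x - unitV d i) y)

/-- `φ` is a centered Gaussian field with covariance function `C`: every finite linear
combination is a centered Gaussian variable with the corresponding variance. -/
def IsCGF {Ω : Type*} [MeasurableSpace Ω] {d : ℕ} (P : Measure Ω)
    (φ : V d → Ω → ℝ) (C : V d → V d → ℝ) : Prop :=
  (∀ x, Measurable (φ x)) ∧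
    ∀ (s : Finset (V d)) (a : V d → ℝ),
      Measure.map (fun ω => ∑ x ∈ s, a x * φ x ω) P =
        gaussianReal 0 (Real.toNNReal (∑ x ∈ s, ∑ y ∈ s, a x * a y * C x y))

/-- `φ` is a Gaussian free field on `ℤ^d`. -/
def IsGFF {Ω : Type*} [MeasurableSpace Ω] {d : ℕ} (P : Measure Ω) (φ : V d → Ω → ℝ) : Prop :=
  IsCGF P φ (green d)

/-- The level set `{φ ≥ h}`. -/
def lvl {d : ℕ} {Ω : Type*} (φ : V d → Ω → ℝ) (h : ℝ) (ω : Ω) : Set (V d) := {x | h ≤ φ x ω}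

/-- The whole field, as one random variable with values in `V d → ℝ`. -/
def proc {Ω : Type*} {d : ℕ} (φ : V d → Ω → ℝ) : Ω → V d → ℝ := fun ω x => φ x ω

/-- The critical parameter `h_*`. -/
def hStar (d : ℕ) {Ω : Type*} [MeasurableSpace Ω] (P : Measure Ω) (φ : V d → Ω → ℝ) : ℝ :=
  sInf {h : ℝ | P {ω | ConnToInf (lvl φ h ω) {(0 : V d)}} = 0}

/-- The critical parameter `h_{**}`. -/
def hStarStar (d : ℕ) {Ω : Type*} [MeasurableSpace Ω] (P : Measure Ω) (φ : V d → Ω → ℝ) : ℝ :=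
  sInf {h : ℝ |
    (⨅ R : ℕ, P {ω | ConnIn (lvl φ h ω) (box d ((R : ℝ) + 1)) (bdry d (2 * ((R : ℝ) + 1)))}) = 0}

/-- `u(R) = exp((log R)^{1/3})`. -/
def ufn (R : ℝ) : ℝ := Real.exp (Real.log R ^ ((1 : ℝ) / 3))

def tildeSet (d : ℕ) {Ω : Type*} [MeasurableSpace Ω] (P : Measure Ω) (φ : V d → Ω → ℝ) :
    Set ℝ :=
  {h : ℝ |
    (⨅ R : ℕ, ENNReal.ofReal (((R : ℝ) + 1) ^ d) *
        P {ω | ¬ ConnIn (lvl φ h ω) (box d (ufn ((R : ℝ) + 1))) (bdry d ((R : ℝ) + 1))}) = 0}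

/-- The critical parameter `h̃`. -/
def hTilde (d : ℕ) {Ω : Type*} [MeasurableSpace Ω] (P : Measure Ω) (φ : V d → Ω → ℝ) : ℝ :=
  sSup (tildeSet d P φ)

/-- The event `Exist(R,α)`. -/
def ExistEv (d : ℕ) {Ω : Type*} (φ : V d → Ω → ℝ) (R : ℕ) (α : ℝ) : Set Ω :=
  {ω | ∃ x ∈ lvl φ α ω ∩ box d (R : ℝ),
    diamGE (comp (lvl φ α ω ∩ box d (R : ℝ)) x) ((R : ℝ) / 5)}

/-- The event `Unique(R,α)`. -/
def UniqueEv (d : ℕ) {Ω : Type*} (φ : V d → Ω → ℝ) (R : ℕ) (α : ℝ) : Set Ω :=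
  {ω | ∀ x ∈ lvl φ α ω ∩ box d (R : ℝ), ∀ y ∈ lvl φ α ω ∩ box d (R : ℝ),
    diamGE (comp (lvl φ α ω ∩ box d (R : ℝ)) x) ((R : ℝ) / 10) →
    diamGE (comp (lvl φ α ω ∩ box d (R : ℝ)) y) ((R : ℝ) / 10) →
    ConnIn (lvl φ α ω ∩ box d (2 * (R : ℝ))) {x} {y}}

/-- `φ` strongly percolates up to level `h`. -/
def StronglyPerc (d : ℕ) {Ω : Type*} [MeasurableSpace Ω] (P : Measure Ω)
    (φ : V d → Ω → ℝ) (h : ℝ) : Prop :=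
  ∃ c : ℝ, 0 < c ∧ ∃ ρ : ℝ, ρ ∈ Set.Ioc (0 : ℝ) 1 ∧
    ∀ α : ℝ, α ≤ h → ∀ R : ℕ, 1 ≤ R →
      ENNReal.ofReal (1 - Real.exp (-c * (R : ℝ) ^ ρ)) ≤ P (ExistEv d φ R α) ∧
      ENNReal.ofReal (1 - Real.exp (-c * (R : ℝ) ^ ρ)) ≤ P (UniqueEv d φ R α)

/-- The critical parameter `h̄`. -/
def hBar (d : ℕ) {Ω : Type*} [MeasurableSpace Ω] (P : Measure Ω) (φ : V d → Ω → ℝ) : ℝ :=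
  sSup {h : ℝ | StronglyPerc d P φ h}


/-- Box with integer radius `r` centered at `x`. -/
def boxI {d : ℕ} (x : V d) (r : ℕ) : Set (V d) := {y | ∀ i, (y i - x i).natAbs ≤ r}

/-- Inner vertex boundary of `boxI x r`. -/
def bdryI {d : ℕ} (x : V d) (r : ℕ) : Set (V d) :=
  {y | y ∈ boxI x r ∧ ∃ z, z ∉ boxI x r ∧ adj y z}

/-- The scales `L_n = ℓ₀^n L₀`. -/
def Lsc (ℓ₀ L₀ n : ℕ) : ℕ := ℓ₀ ^ n * L₀

/-- The renormalised lattice `𝕃_n = (2L_n+1)ℤ^d`. -/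
def latt (d ℓ₀ L₀ n : ℕ) : Set (V d) := {x | ∀ i, ((2 * Lsc ℓ₀ L₀ n + 1 : ℕ) : ℤ) ∣ x i}

/-- The `ℓ∞`-distance between the sets `A` and `B` is at least `r`. -/
def setDistGE {d : ℕ} (A B : Set (V d)) (r : ℕ) : Prop := ∀ a ∈ A, ∀ b ∈ B, r ≤ dinf a b

/-- `Σ_n` centered at `x₀` (with `⌊8.5 κ L_n⌋ = 17 κ L_n / 2`). -/
def SgAt (d ℓ₀ L₀ κ : ℕ) (n : ℕ) (x₀ : V d) : Set (V d) :=
  boxI x₀ (9 * κ * Lsc ℓ₀ L₀ n) \ boxI x₀ (17 * κ * Lsc ℓ₀ L₀ n / 2)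

/-- `Λ_n` centered at `x₀`; `annulus` selects which of the two admissible choices is used. -/
def LamAt (d ℓ₀ L₀ κ : ℕ) (annulus : Bool) (n : ℕ) (x₀ : V d) : Set (V d) :=
  if annulus then boxI x₀ (10 * κ * Lsc ℓ₀ L₀ n) \ boxI x₀ (κ * Lsc ℓ₀ L₀ n)
  else boxI x₀ (10 * κ * Lsc ℓ₀ L₀ n)

/-- Definition 2.1: a bridge between `S₁` and `S₂` inside `Sg`, encoded as the finite set of
pairs `(m, x)` labelling the `m`-boxes `B_{L_m}(x)` constituting it. -/
structure IsBridge (d ℓ₀ L₀ κ K : ℕ) (n : ℕ) (Sg S₁ S₂ : Set (V d))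
    (ℬ : Finset (ℕ × V d)) : Prop where
  /-- B1: each element is an `m`-box, `0 ≤ m ≤ n`, included in `Sg`. -/
  boxes : ∀ b ∈ ℬ, b.1 ≤ n ∧ b.2 ∈ latt d ℓ₀ L₀ b.1 ∧ boxI b.2 (Lsc ℓ₀ L₀ b.1) ⊆ Sg
  /-- B1: the union of the boxes is connected. -/
  conn : IsConnSet (⋃ b ∈ ℬ, boxI b.2 (Lsc ℓ₀ L₀ b.1))
  /-- B2. -/
  ends : ∃ b₁ ∈ ℬ, ∃ b₂ ∈ ℬ, b₁.1 = 0 ∧ b₂.1 = 0 ∧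
    (boxI b₁.2 (Lsc ℓ₀ L₀ 0) ∩ S₁).Nonempty ∧ (boxI b₂.2 (Lsc ℓ₀ L₀ 0) ∩ S₂).Nonempty ∧
    ∀ b ∈ ℬ, b ≠ b₁ → b ≠ b₂ → boxI b.2 (Lsc ℓ₀ L₀ b.1) ∩ (S₁ ∪ S₂) = ∅
  /-- B3. -/
  far : ∀ b ∈ ℬ, 1 ≤ b.1 →
    setDistGE (boxI b.2 (Lsc ℓ₀ L₀ b.1)) (S₁ ∪ S₂) (κ * Lsc ℓ₀ L₀ b.1)
  /-- B4. -/
  count : ∀ m : ℕ, (ℬ.filter fun b => b.1 = m).card ≤ 2 * K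

/-- Definition 2.2 (conditions G1 and G2): the collection of boxes `ℬ` is good. -/
def GoodCol {Ω : Type*} (d ℓ₀ L₀ : ℕ) (F : V d → Set Ω) (H : ℕ → V d → Set Ω)
    (ℬ : Finset (ℕ × V d)) (ω : Ω) : Prop :=
  (∀ b ∈ ℬ, b.1 = 0 → ω ∈ F b.2) ∧
    ∀ b ∈ ℬ, ∀ j : ℕ, max b.1 1 ≤ j →
      ∀ y ∈ latt d ℓ₀ L₀ j, b.2 ∈ boxI y (Lsc ℓ₀ L₀ j) → ω ∈ H j y

/-- A set `S` is admissible (relative to the center `x₀` and scale `n`). -/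
def AdmissibleAt (d ℓ₀ L₀ κ : ℕ) (n : ℕ) (x₀ : V d) (S : Set (V d)) : Prop :=
  (∀ x ∈ S, (comp S x ∩ bdryI x₀ (10 * κ * Lsc ℓ₀ L₀ n)).Nonempty) ∧
    ∃ x ∈ S, (comp S x ∩ boxI x₀ (8 * κ * Lsc ℓ₀ L₀ n)).Nonempty

/-- The event `𝒢_{n,x₀}`: between every pair of admissible sets there is a good bridge
inside `x₀ + Σ_n`. -/
def GEvent {Ω : Type*} (d ℓ₀ L₀ κ K : ℕ) (F : V d → Set Ω) (H : ℕ → V d → Set Ω)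
    (annulus : Bool) (n : ℕ) (x₀ : V d) : Set Ω :=
  {ω | ∀ S₁ S₂ : Set (V d),
    S₁ ⊆ LamAt d ℓ₀ L₀ κ annulus n x₀ → S₂ ⊆ LamAt d ℓ₀ L₀ κ annulus n x₀ →
    AdmissibleAt d ℓ₀ L₀ κ n x₀ S₁ → AdmissibleAt d ℓ₀ L₀ κ n x₀ S₂ →
    ∃ ℬ : Finset (ℕ × V d),
      IsBridge d ℓ₀ L₀ κ K n (SgAt d ℓ₀ L₀ κ n x₀) S₁ S₂ ℬ ∧
        GoodCol d ℓ₀ L₀ F H ℬ ω}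

/-- Condition C1: the families `F, H₁, H₂, …` are mutually independent. -/
def CondC1 {Ω : Type*} [MeasurableSpace Ω] (d ℓ₀ L₀ : ℕ) (P : Measure Ω)
    (F : V d → Set Ω) (H : ℕ → V d → Set Ω) : Prop :=
  iIndep (fun n : ℕ => MeasurableSpace.generateFrom
    (if n = 0 then {A | ∃ x ∈ latt d ℓ₀ L₀ 0, A = F x}
     else {A | ∃ x ∈ latt d ℓ₀ L₀ n, A = H n x})) P

/-- Condition C2: events indexed by `κ/2`-separated points are independent. -/
def CondC2 {Ω : Type*} [MeasurableSpace Ω] (d ℓ₀ L₀ κ : ℕ) (P : Measure Ω)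
    (F : V d → Set Ω) (H : ℕ → V d → Set Ω) : Prop :=
  ∀ U : Finset (V d), (∀ u ∈ U, ∀ v ∈ U, u ≠ v → κ ≤ 2 * dinf u v) →
    iIndepSet (fun u : U => F fun i => (2 * (Lsc ℓ₀ L₀ 0 : ℤ) + 1) * u.1 i) P ∧
      ∀ n : ℕ, 1 ≤ n →
        iIndepSet (fun u : U => H n fun i => (2 * (Lsc ℓ₀ L₀ n : ℤ) + 1) * u.1 i) P

/-- A `0`-bridge inside `Sg` between `S₁` and `S₂`: a collection of `0`-boxes whose union is
a connected subset of `Sg` intersecting both `S₁` and `S₂`. -/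
def Is0Bridge (d ℓ₀ L₀ : ℕ) (Sg S₁ S₂ : Set (V d)) (ℬ : Finset (V d)) : Prop :=
  (∀ x ∈ ℬ, x ∈ latt d ℓ₀ L₀ 0) ∧
    (⋃ x ∈ ℬ, boxI x (Lsc ℓ₀ L₀ 0)) ⊆ Sg ∧
    IsConnSet (⋃ x ∈ ℬ, boxI x (Lsc ℓ₀ L₀ 0)) ∧
    ((⋃ x ∈ ℬ, boxI x (Lsc ℓ₀ L₀ 0)) ∩ S₁).Nonempty ∧
    ((⋃ x ∈ ℬ, boxI x (Lsc ℓ₀ L₀ 0)) ∩ S₂).Nonempty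

/-- A `0`-bridge is good: G1 and G2 hold for each of its `0`-boxes. -/
def Good0 {Ω : Type*} (d ℓ₀ L₀ : ℕ) (F : V d → Set Ω) (H : ℕ → V d → Set Ω)
    (ℬ : Finset (V d)) (ω : Ω) : Prop :=
  ∀ x ∈ ℬ, ω ∈ F x ∧
    ∀ j : ℕ, 1 ≤ j → ∀ y ∈ latt d ℓ₀ L₀ j, x ∈ boxI y (Lsc ℓ₀ L₀ j) → ω ∈ H j y

/-- The event `𝒢_n⁰` with notion (i) of admissibility: there is a good `0`-bridge inside
`Σ_n` between any two admissible sets `S₁, S₂ ⊆ Λ_n = B_{10κL_n}`. -/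
def G0EventI {Ω : Type*} (d ℓ₀ L₀ κ : ℕ) (F : V d → Set Ω) (H : ℕ → V d → Set Ω)
    (n : ℕ) : Set Ω :=
  {ω | ∀ S₁ S₂ : Set (V d),
    S₁ ⊆ boxI (0 : V d) (10 * κ * Lsc ℓ₀ L₀ n) → S₂ ⊆ boxI (0 : V d) (10 * κ * Lsc ℓ₀ L₀ n) →
    AdmissibleAt d ℓ₀ L₀ κ n 0 S₁ → AdmissibleAt d ℓ₀ L₀ κ n 0 S₂ →
    ∃ ℬ : Finset (V d), Is0Bridge d ℓ₀ L₀ (SgAt d ℓ₀ L₀ κ n 0) S₁ S₂ ℬ ∧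
      Good0 d ℓ₀ L₀ F H ℬ ω}

/-- The event `𝒢_n⁰` with notion (ii) of admissibility: there is a good `0`-bridge inside
`Λ_n` between any two connected subsets of `Λ̲_n = B_{8κL_n}` of diameter at least `κL_n`. -/
def G0EventII {Ω : Type*} (d ℓ₀ L₀ κ : ℕ) (F : V d → Set Ω) (H : ℕ → V d → Set Ω)
    (n : ℕ) : Set Ω :=
  {ω | ∀ S₁ S₂ : Set (V d),
    S₁ ⊆ boxI (0 : V d) (8 * κ * Lsc ℓ₀ L₀ n) → S₂ ⊆ boxI (0 : V d) (8 * κ * Lsc ℓ₀ L₀ n) →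
    IsConnSet S₁ → IsConnSet S₂ →
    diamGE S₁ ((κ * Lsc ℓ₀ L₀ n : ℕ) : ℝ) → diamGE S₂ ((κ * Lsc ℓ₀ L₀ n : ℕ) : ℝ) →
    ∃ ℬ : Finset (V d),
      Is0Bridge d ℓ₀ L₀ (boxI (0 : V d) (10 * κ * Lsc ℓ₀ L₀ n)) S₁ S₂ ℬ ∧
        Good0 d ℓ₀ L₀ F H ℬ ω}



/-! ### Elementary geometry -/

theorem dinf_le {d : ℕ} {x y : V d} {r : ℕ} : dinf x y ≤ r ↔ ∀ i, (x i - y i).natAbs ≤ r := by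
  simp [dinf]

theorem coord_le_dinf {d : ℕ} (x y : V d) (i : Fin d) : (x i - y i).natAbs ≤ dinf x y :=
  dinf_le.1 le_rfl i

theorem mem_boxI {d : ℕ} {x y : V d} {r : ℕ} : y ∈ boxI x r ↔ dinf y x ≤ r := by
  rw [dinf_le]; rfl

theorem dinf_comm' {d : ℕ} (x y : V d) : dinf x y = dinf y x := by
  unfold dinf
  congr 1
  funext i
  omega

theorem dinf_tri {d : ℕ} (x y z : V d) : dinf x z ≤ dinf x y + dinf y z := by
  rw [dinf_le]
  intro i
  have := coord_le_dinf x y i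
  have := coord_le_dinf y z i
  omega

theorem exists_coord {d : ℕ} (hd : 3 ≤ d) (x y : V d) :
    ∃ i, dinf x y = (x i - y i).natAbs := by
  have : (Finset.univ : Finset (Fin d)).Nonempty := ⟨⟨0, by omega⟩, Finset.mem_univ _⟩
  obtain ⟨i, -, hi⟩ := Finset.exists_mem_eq_sup _ this fun i => (x i - y i).natAbs
  exact ⟨i, hi⟩

theorem adj_coord {d : ℕ} {x y : V d} (h : adj x y) (i : Fin d) : (x i - y i).natAbs ≤ 1 := by
  have h' : ∑ i, (x i - y i).natAbs = 1 := h
  rw [← h']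
  exact Finset.single_le_sum (f := fun i => (x i - y i).natAbs) (fun _ _ => Nat.zero_le _)
    (Finset.mem_univ i)

theorem adj_dinf {d : ℕ} {x y : V d} (h : adj x y) : dinf x y ≤ 1 :=
  dinf_le.2 (adj_coord h)

theorem adj_symm {d : ℕ} {x y : V d} (h : adj x y) : adj y x := by
  unfold adj at *
  rw [← h]
  refine Finset.sum_congr rfl fun i _ => ?_
  omega

/-- Reachability inside `S`. -/
def Rch {d : ℕ} (S : Set (V d)) : V d → V d → Prop :=
  Relation.ReflTransGen fun a b => adj a b ∧ b ∈ S

theorem connIn_iff {d : ℕ} {S : Set (V d)} {x y : V d} :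
    ConnIn S {x} {y} ↔ x ∈ S ∧ Rch S x y := by
  constructor
  · rintro ⟨n, γ, h0, hn, hS, ha⟩
    simp only [Set.mem_singleton_iff] at h0 hn
    subst h0
    refine ⟨hS 0 (Nat.zero_le _), ?_⟩
    have : ∀ k, k ≤ n → Rch S (γ 0) (γ k) := by
      intro k
      induction k with
      | zero => intro _; exact Relation.ReflTransGen.refl
      | succ k ih =>
        intro hk
        exact (ih (by omega)).tail ⟨ha k (by omega), hS _ hk⟩
    rw [← hn]
    exact this n le_rfl
  · rintro ⟨hx, h⟩
    induction h with
    | refl => exact ⟨0, fun _ => x, rfl, rfl, fun _ _ => hx, fun k hk => absurd hk (by omega)⟩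
    | @tail b c _ hbc ih =>
      obtain ⟨n, γ, h0, hn, hS, ha⟩ := ih
      simp only [Set.mem_singleton_iff] at h0 hn
      refine ⟨n + 1, fun k => if k ≤ n then γ k else c, ?_, ?_, ?_, ?_⟩
      · simp [h0]
      · simp
      · intro k hk
        by_cases h : k ≤ n
        · simpa [h] using hS k h
        · simpa [h] using hbc.2
      · intro k hk
        by_cases h : k + 1 ≤ n
        · have h' : k ≤ n := by omega
          simpa [h, h'] using ha k (by omega)
        · have h' : k = n := by omega
          subst h'
          simpa [hn] using hbc.1

theorem Rch.mem {d : ℕ} {S : Set (V d)} {x y : V d} (hx : x ∈ S) (h : Rch S x y) : y ∈ S := by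
  induction h with
  | refl => exact hx
  | tail _ h _ => exact h.2

theorem Rch.mono {d : ℕ} {S T : Set (V d)} (hST : S ⊆ T) {x y : V d} (h : Rch S x y) :
    Rch T x y :=
  Relation.ReflTransGen.mono (fun _ _ h => ⟨h.1, hST h.2⟩) _ _ h

theorem Rch.symm {d : ℕ} {S : Set (V d)} {x y : V d} (hx : x ∈ S) (h : Rch S x y) :
    Rch S y x := by
  induction h with
  | refl => exact Relation.ReflTransGen.refl
  | tail h0 h ih => exact Relation.ReflTransGen.head ⟨adj_symm h.1, Rch.mem hx h0⟩ ih

theorem Rch.trans {d : ℕ} {S : Set (V d)} {x y z : V d} (h : Rch S x y) (h' : Rch S y z) :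
    Rch S x z := Relation.ReflTransGen.trans h h'

theorem isConnSet_iff {d : ℕ} {S : Set (V d)} :
    IsConnSet S ↔ ∀ x ∈ S, ∀ y ∈ S, Rch S x y := by
  unfold IsConnSet
  constructor
  · intro h x hx y hy
    exact (connIn_iff.1 (h x hx y hy)).2
  · intro h x hx y hy
    exact connIn_iff.2 ⟨hx, h x hx y hy⟩

/-- A set all of whose points are reachable from one of them is connected. -/
theorem isConnSet_of_root {d : ℕ} {S : Set (V d)} {p : V d} (hp : p ∈ S)
    (h : ∀ x ∈ S, Rch S p x) : IsConnSet S :=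
  isConnSet_iff.2 fun x hx y hy => (Rch.symm hp (h x hx)).trans (h y hy)

theorem isConnSet_union {d : ℕ} {S T : Set (V d)} (hS : IsConnSet S) (hT : IsConnSet T)
    (h : (S ∩ T).Nonempty) : IsConnSet (S ∪ T) := by
  obtain ⟨p, hpS, hpT⟩ := h
  rw [isConnSet_iff] at hS hT
  refine isConnSet_of_root (p := p) (Or.inl hpS) ?_
  rintro x (hx | hx)
  · exact (hS p hpS x hx).mono Set.subset_union_left
  · exact (hT p hpT x hx).mono Set.subset_union_right

theorem comp_conn {d : ℕ} (S : Set (V d)) (x : V d) : IsConnSet (comp S x) := by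
  by_cases hx : x ∈ S
  · have key : ∀ y, Rch S x y → Rch (comp S x) x y := by
      intro y hy
      induction hy with
      | refl => exact Relation.ReflTransGen.refl
      | tail h0 h ih =>
        exact ih.tail ⟨h.1, connIn_iff.2 ⟨hx, h0.tail h⟩⟩
    refine isConnSet_of_root (p := x) (connIn_iff.2 ⟨hx, Relation.ReflTransGen.refl⟩) ?_
    intro y hy
    exact key y (connIn_iff.1 hy).2
  · intro y hy
    exact absurd (connIn_iff.1 hy).1 hx

theorem comp_sub {d : ℕ} (S : Set (V d)) (x : V d) : comp S x ⊆ S := by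
  intro y hy
  have := connIn_iff.1 hy
  exact Rch.mem this.1 this.2

/-- Discrete intermediate value theorem. -/
theorem ivt {d : ℕ} {S : Set (V d)} (hS : IsConnSet S) (f : V d → ℕ)
    (hf : ∀ a b, adj a b → f b ≤ f a + 1) {x y : V d} (hx : x ∈ S) (hy : y ∈ S) {t : ℕ}
    (h1 : f x ≤ t) (h2 : t ≤ f y) : ∃ p ∈ S, f p = t := by
  have h := isConnSet_iff.1 hS x hx y hy
  have key : ∀ z, Rch S x z → (∃ p ∈ S, f p = t) ∨ f z ≤ t := by
    intro z hz
    induction hz with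
    | refl => exact Or.inr h1
    | @tail b c h0 h ih =>
      rcases ih with ih | ih
      · exact Or.inl ih
      · by_cases hb : f b = t
        · exact Or.inl ⟨b, Rch.mem hx h0, hb⟩
        · right
          have := hf b c h.1
          omega
  rcases key y h with h | h
  · exact h
  · exact ⟨y, hy, le_antisymm h h2⟩

/-- A connected set of large diameter contains a localized piece around each point. -/
theorem piece {d : ℕ} {X : Set (V d)} (hX : IsConnSet X) {p x y : V d} (hp : p ∈ X)
    (hx : x ∈ X) (hy : y ∈ X) {r : ℕ} (h : 2 * r ≤ dinf x y) :
    ∃ A, A ⊆ X ∧ A ⊆ boxI p r ∧ IsConnSet A ∧ ∃ a ∈ A, ∃ b ∈ A, r ≤ dinf a b := by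
  obtain ⟨q, hq, hpq⟩ : ∃ q ∈ X, r ≤ dinf p q := by
    by_contra! hc
    have h1 := hc x hx
    have h2 := hc y hy
    have h3 := dinf_tri x p y
    rw [dinf_comm' x p] at h3
    omega
  have hp0 : p ∈ X ∩ boxI p r := ⟨hp, by rw [mem_boxI, dinf_le]; intro i; simp⟩
  refine ⟨comp (X ∩ boxI p r) p, fun z hz => (comp_sub _ _ hz).1, fun z hz => (comp_sub _ _ hz).2,
    comp_conn _ _, p, connIn_iff.2 ⟨hp0, Relation.ReflTransGen.refl⟩, ?_⟩
  have key : ∀ z, Rch X p z → (∃ b ∈ comp (X ∩ boxI p r) p, r ≤ dinf p b) ∨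
      z ∈ comp (X ∩ boxI p r) p := by
    intro z hz
    induction hz with
    | refl => exact Or.inr (connIn_iff.2 ⟨hp0, Relation.ReflTransGen.refl⟩)
    | @tail b c h0 h ih =>
      rcases ih with ih | ih
      · exact Or.inl ih
      · by_cases hb : dinf c p ≤ r
        · right
          exact connIn_iff.2 ⟨hp0, (connIn_iff.1 ih).2.tail ⟨h.1, h.2, mem_boxI.2 hb⟩⟩
        · left
          refine ⟨b, ih, ?_⟩
          have h1 := dinf_tri p b c
          have h2 := adj_dinf h.1
          rw [dinf_comm' p c] at h1
          omega
  rcases key q (isConnSet_iff.1 hX p hp q hq) with h | h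
  · exact h
  · exact ⟨q, h, hpq⟩

/-- Axis-parallel moves. -/
theorem rch_box {d : ℕ} (W : Set (V d)) : ∀ (n : ℕ) (x y : V d),
    ∑ i, (x i - y i).natAbs = n →
    (∀ z : V d, (∀ i, min (x i) (y i) ≤ z i ∧ z i ≤ max (x i) (y i)) → z ∈ W) → Rch W x y := by
  intro n
  induction n with
  | zero =>
    intro x y h _
    have : x = y := by
      funext i
      have := (Finset.sum_eq_zero_iff.1 h) i (Finset.mem_univ i)
      omega
    subst this
    exact Relation.ReflTransGen.refl
  | succ n ih =>
    intro x y h hW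
    obtain ⟨i, hi⟩ : ∃ i, x i ≠ y i := by
      by_contra! hc
      simp [hc] at h
    obtain ⟨e, he1, he2⟩ : ∃ e : ℤ, (x i - e).natAbs = 1 ∧
        (e - y i).natAbs + 1 = (x i - y i).natAbs := by
      rcases lt_or_gt_of_ne hi with h | h
      · exact ⟨x i + 1, by omega, by omega⟩
      · exact ⟨x i - 1, by omega, by omega⟩
    have hadj : adj x (Function.update x i e) := by
      unfold adj
      rw [Finset.sum_eq_single i]
      · simp [he1]
      · intro j _ hj
        simp [Function.update_of_ne hj]
      · simp
    have hsub : ∀ z : V d, (∀ j, min (Function.update x i e j) (y j) ≤ z j ∧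
        z j ≤ max (Function.update x i e j) (y j)) → z ∈ W := by
      intro z hz
      apply hW
      intro j
      have := hz j
      by_cases hj : j = i
      · subst hj
        simp only [Function.update_self] at this
        omega
      · simpa [Function.update_of_ne hj] using this
    refine Relation.ReflTransGen.head ⟨hadj, hsub _ fun j => ?_⟩ (ih _ y ?_ hsub)
    · simp
    · rw [← Finset.add_sum_erase _ _ (Finset.mem_univ i)] at h ⊢
      have : ∑ j ∈ Finset.univ.erase i, (Function.update x i e j - y j).natAbs =
          ∑ j ∈ Finset.univ.erase i, (x j - y j).natAbs := by
        refine Finset.sum_congr rfl fun j hj => ?_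
        rw [Function.update_of_ne (Finset.ne_of_mem_erase hj)]
      rw [this]
      simp only [Function.update_self]
      omega

theorem boxI_conn {d : ℕ} (x : V d) (r : ℕ) : IsConnSet (boxI x r) := by
  rw [isConnSet_iff]
  intro a ha b hb
  refine rch_box _ _ a b rfl ?_
  intro z hz i
  have := hz i
  have := ha i
  have := hb i
  omega

theorem self_mem_boxI {d : ℕ} (x : V d) (r : ℕ) : x ∈ boxI x r := by
  intro i; simp

/-- The three-legged path. -/
theorem rch_three {d : ℕ} (W : Set (V d)) (p q : V d) (k : Fin d) (ρ : ℤ)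
    (h1 : ∀ z : V d, (∀ i, i ≠ k → z i = p i) → min (p k) ρ ≤ z k → z k ≤ max (p k) ρ → z ∈ W)
    (h2 : ∀ z : V d, z k = ρ → (∀ i, i ≠ k → min (p i) (q i) ≤ z i ∧ z i ≤ max (p i) (q i)) →
      z ∈ W)
    (h3 : ∀ z : V d, (∀ i, i ≠ k → z i = q i) → min (q k) ρ ≤ z k → z k ≤ max (q k) ρ → z ∈ W) :
    Rch W p q := by
  have e1 : Rch W p (Function.update p k ρ) := by
    refine rch_box _ _ _ _ rfl fun z hz => h1 z ?_ ?_ ?_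
    · intro i hi
      have := hz i
      rw [Function.update_of_ne hi] at this
      omega
    · simpa using (hz k).1
    · simpa using (hz k).2
  have e2 : Rch W (Function.update p k ρ) (Function.update q k ρ) := by
    refine rch_box _ _ _ _ rfl fun z hz => h2 z ?_ ?_
    · have := hz k
      simp only [Function.update_self] at this
      omega
    · intro i hi
      have := hz i
      rwa [Function.update_of_ne hi, Function.update_of_ne hi] at this
  have e3 : Rch W (Function.update q k ρ) q := by
    refine rch_box _ _ _ _ rfl fun z hz => h3 z ?_ ?_ ?_
    · intro i hi
      have := hz i
      rw [Function.update_of_ne hi] at this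
      omega
    · have := (hz k).1
      simp only [Function.update_self] at this
      omega
    · have := (hz k).2
      simp only [Function.update_self] at this
      omega
  exact (e1.trans e2).trans e3


/-! ### Bridges and chaining -/

/-- Existence of a `0`-bridge made of boxes satisfying `g`. -/
def Br (d ℓ₀ L₀ : ℕ) (g : V d → Prop) (Sg S₁ S₂ : Set (V d)) : Prop :=
  ∃ ℬ : Finset (V d), Is0Bridge d ℓ₀ L₀ Sg S₁ S₂ ℬ ∧ ∀ x ∈ ℬ, g x

/-- Local linking property at `γ`. -/
def Dp (d ℓ₀ L₀ : ℕ) (g : V d → Prop) (r s R : ℕ) (γ : V d) : Prop :=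
  ∀ S₁ S₂ : Set (V d), S₁ ⊆ boxI γ s → S₂ ⊆ boxI γ s → IsConnSet S₁ → IsConnSet S₂ →
    (∃ a ∈ S₁, ∃ b ∈ S₁, r ≤ dinf a b) → (∃ a ∈ S₂, ∃ b ∈ S₂, r ≤ dinf a b) →
    Br d ℓ₀ L₀ g (boxI γ R) S₁ S₂

theorem Br.mono {d ℓ₀ L₀ : ℕ} {g g' : V d → Prop} {Sg Sg' S₁ S₂ S₁' S₂' : Set (V d)}
    (h : Br d ℓ₀ L₀ g Sg S₁ S₂) (hg : ∀ x, x ∈ Sg → g x → g' x) (hS : Sg ⊆ Sg')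
    (h1 : S₁ ⊆ S₁') (h2 : S₂ ⊆ S₂') : Br d ℓ₀ L₀ g' Sg' S₁' S₂' := by
  obtain ⟨ℬ, ⟨hl, hs, hc, hi, hj⟩, hG⟩ := h
  refine ⟨ℬ, ⟨hl, hs.trans hS, hc, hi.mono (Set.inter_subset_inter_right _ h1),
    hj.mono (Set.inter_subset_inter_right _ h2)⟩, fun x hx => hg x ?_ (hG x hx)⟩
  exact hs (Set.mem_biUnion hx (self_mem_boxI x _))

theorem chain {d ℓ₀ L₀ : ℕ} (hd : 3 ≤ d) {g : V d → Prop} {r s R : ℕ} (hs1 : 5 * r ≤ s)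
    (hs2 : 2 * r + 1 ≤ s)
    {W Sg : Set (V d)} (hW : ∀ γ ∈ W, Dp d ℓ₀ L₀ g r s R γ ∧ boxI γ R ⊆ Sg) {p q : V d}
    (hp : p ∈ W) (h : Rch W p q) (S₁ : Set (V d)) (h1 : S₁ ⊆ boxI p s) (hc1 : IsConnSet S₁)
    (hd1 : ∃ a ∈ S₁, ∃ b ∈ S₁, r ≤ dinf a b) :
    ∀ S₂ : Set (V d), S₂ ⊆ boxI q s → IsConnSet S₂ → (∃ a ∈ S₂, ∃ b ∈ S₂, r ≤ dinf a b) →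
      Br d ℓ₀ L₀ g Sg S₁ S₂ := by
  induction h with
  | refl =>
    intro S₂ h2 hc2 hd2
    exact ((hW p hp).1 S₁ S₂ h1 h2 hc1 hc2 hd1 hd2).mono (fun _ _ h => h) (hW p hp).2
      subset_rfl subset_rfl
  | @tail b c h0 hbc ih =>
    intro S₂ h2 hc2 hd2
    have i0 : Fin d := ⟨0, by omega⟩
    set c' : V d := fun i => c i + 4 * r with hc'
    have hdiam : ∀ z : V d, ∃ a ∈ boxI z r, ∃ b ∈ boxI z r, r ≤ dinf a b := by
      intro z
      refine ⟨z, self_mem_boxI _ _, fun i => z i + r, ?_, ?_⟩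
      · intro i
        show (z i + r - z i).natAbs ≤ r
        omega
      · refine le_trans ?_ (coord_le_dinf _ _ i0)
        show r ≤ (z i0 - (z i0 + r)).natAbs
        omega
    obtain ⟨⟨ℬ, ⟨hl, hs, hc, ⟨x, hxU, hx⟩, ⟨y, hyU, hy⟩⟩, hG⟩, hRS⟩ :=
      (⟨(hW c hbc.2).1 (boxI c r) (boxI c' r) (by
          intro z hz i
          have := hz i
          omega) (by
          intro z hz i
          have := hz i
          simp only [hc'] at this
          omega) (boxI_conn _ _) (boxI_conn _ _) (hdiam _) (hdiam _), (hW c hbc.2).2⟩ :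
        Br d ℓ₀ L₀ g (boxI c R) (boxI c r) (boxI c' r) ∧ boxI c R ⊆ Sg)
    have hxy : 2 * r ≤ dinf x y := by
      refine le_trans ?_ (coord_le_dinf _ _ i0)
      have e1 := hx i0
      have e2 := hy i0
      simp only [hc'] at e2
      omega
    obtain ⟨A, hAU, hAx, hAc, hAd⟩ := piece hc hxU hxU hyU hxy
    have hAc2 : A ⊆ boxI c (2 * r) := by
      intro z hz i
      have := hAx hz i
      have := hx i
      omega
    have hAb : A ⊆ boxI b s := by
      intro z hz i
      have := hAc2 hz i
      have := adj_coord hbc.1 i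
      omega
    have hAcs : A ⊆ boxI c s := by
      intro z hz i
      have := hAc2 hz i
      omega
    obtain ⟨ℬ₁, ⟨hl1, hs1, hcc1, hi1, hj1⟩, hG1⟩ := ih A hAb hAc hAd
    obtain ⟨ℬ₂, ⟨hl2, hs2, hcc2, hi2, hj2⟩, hG2⟩ :=
      (hW c hbc.2).1 A S₂ hAcs h2 hAc hc2 hAd hd2
    have hU : (⋃ x ∈ ℬ₁ ∪ ℬ ∪ ℬ₂, boxI x (Lsc ℓ₀ L₀ 0)) =
        (⋃ x ∈ ℬ₁, boxI x (Lsc ℓ₀ L₀ 0)) ∪ (⋃ x ∈ ℬ, boxI x (Lsc ℓ₀ L₀ 0)) ∪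
        (⋃ x ∈ ℬ₂, boxI x (Lsc ℓ₀ L₀ 0)) := by
      rw [Finset.set_biUnion_union, Finset.set_biUnion_union]
    refine ⟨ℬ₁ ∪ ℬ ∪ ℬ₂, ⟨?_, ?_, ?_, ?_, ?_⟩, ?_⟩
    · intro x hx
      simp only [Finset.mem_union] at hx
      rcases hx with (hx | hx) | hx
      · exact hl1 x hx
      · exact hl x hx
      · exact hl2 x hx
    · rw [hU]
      exact Set.union_subset (Set.union_subset hs1 (hs.trans hRS)) (hs2.trans hRS)
    · rw [hU]
      refine isConnSet_union (isConnSet_union hcc1 hc ?_) hcc2 ?_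
      · exact hj1.mono (Set.inter_subset_inter_right _ hAU)
      · obtain ⟨z, hz1, hz2⟩ := hi2
        exact ⟨z, Or.inr (hAU hz2), hz1⟩
    · rw [hU]
      obtain ⟨z, hz1, hz2⟩ := hi1
      exact ⟨z, Or.inl (Or.inl hz1), hz2⟩
    · rw [hU]
      obtain ⟨z, hz1, hz2⟩ := hj2
      exact ⟨z, Or.inr hz1, hz2⟩
    · intro x hx
      simp only [Finset.mem_union] at hx
      rcases hx with (hx | hx) | hx
      · exact hG1 x hx
      · exact hG x hx
      · exact hG2 x hx

/-- Chaining for arbitrary connected sets of diameter at least `2r`. -/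
theorem chain' {d ℓ₀ L₀ : ℕ} (hd : 3 ≤ d) {g : V d → Prop} {r s R : ℕ} (hs1 : 5 * r ≤ s)
    (hs2 : 2 * r + 1 ≤ s)
    {W Sg : Set (V d)} (hW : ∀ γ ∈ W, Dp d ℓ₀ L₀ g r s R γ ∧ boxI γ R ⊆ Sg) {p q : V d}
    (hp : p ∈ W) (h : Rch W p q) (S₁ S₂ : Set (V d)) (hc1 : IsConnSet S₁) (hc2 : IsConnSet S₂)
    (hd1 : ∃ a ∈ S₁, ∃ b ∈ S₁, 2 * r ≤ dinf a b) (hd2 : ∃ a ∈ S₂, ∃ b ∈ S₂, 2 * r ≤ dinf a b)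
    (hp1 : p ∈ S₁) (hq2 : q ∈ S₂) : Br d ℓ₀ L₀ g Sg S₁ S₂ := by
  obtain ⟨a, ha, b, hb, hab⟩ := hd1
  obtain ⟨a', ha', b', hb', hab'⟩ := hd2
  obtain ⟨A, hA1, hA2, hA3, hA4⟩ := piece hc1 hp1 ha hb hab
  obtain ⟨B, hB1, hB2, hB3, hB4⟩ := piece hc2 hq2 ha' hb' hab'
  refine (chain hd hs1 hs2 hW hp h A ?_ hA3 hA4 B ?_ hB3 hB4).mono (fun _ _ h => h) subset_rfl
    hA1 hB1
  · intro z hz i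
    have := hA2 hz i
    omega
  · intro z hz i
    have := hB2 hz i
    omega

theorem exists_third {d : ℕ} (hd : 3 ≤ d) (i j : Fin d) : ∃ k : Fin d, k ≠ i ∧ k ≠ j := by
  have : ({i, j} : Finset (Fin d)).card < (Finset.univ : Finset (Fin d)).card := by
    refine lt_of_le_of_lt Finset.card_le_two ?_
    simp
    omega
  obtain ⟨k, -, hk⟩ := Finset.exists_mem_notMem_of_card_lt_card this
  simp only [Finset.mem_insert, Finset.mem_singleton, not_or] at hk
  exact ⟨k, hk.1, hk.2⟩

/-- Linking in a full box, with one exceptional ball. -/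
theorem link_box {d ℓ₀ L₀ : ℕ} (hd : 3 ≤ d) {g : V d → Prop} {r s R M N : ℕ} (hs1 : 5 * r ≤ s)
    (hs2 : 2 * r + 1 ≤ s) (hr : 2 * r ≤ N) (hN : 4 * R + 4 * M + 4 ≤ N) (x z : V d)
    (hD : ∀ γ ∈ boxI x (9 * N), M < dinf γ z → Dp d ℓ₀ L₀ g r s R γ)
    (S₁ S₂ : Set (V d)) (h1 : S₁ ⊆ boxI x (8 * N)) (h2 : S₂ ⊆ boxI x (8 * N))
    (hc1 : IsConnSet S₁) (hc2 : IsConnSet S₂)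
    (hd1 : ∃ a ∈ S₁, ∃ b ∈ S₁, N ≤ dinf a b) (hd2 : ∃ a ∈ S₂, ∃ b ∈ S₂, N ≤ dinf a b) :
    Br d ℓ₀ L₀ g (boxI x (10 * N)) S₁ S₂ := by
  have sel : ∀ S : Set (V d), (∃ a ∈ S, ∃ b ∈ S, N ≤ dinf a b) →
      ∃ p ∈ S, ∃ i, M < (p i - z i).natAbs := by
    rintro S ⟨a, ha, b, hb, hab⟩
    obtain ⟨i, hi⟩ := exists_coord hd a b
    by_cases h : M < (a i - z i).natAbs
    · exact ⟨a, ha, i, h⟩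
    · exact ⟨b, hb, i, by omega⟩
  obtain ⟨p, hp, i, hi⟩ := sel S₁ hd1
  obtain ⟨q, hq, j, hj⟩ := sel S₂ hd2
  obtain ⟨k, hki, hkj⟩ := exists_third hd i j
  obtain ⟨ρ, hρ1, hρ2⟩ : ∃ ρ : ℤ, M < (ρ - z k).natAbs ∧ (ρ - x k).natAbs ≤ N := by
    by_cases h : M < (x k - z k).natAbs
    · exact ⟨x k, h, by omega⟩
    · exact ⟨x k + 2 * M + 1, by omega, by omega⟩
  have hpx := h1 hp
  have hqx := h2 hq
  set W : Set (V d) := {γ | γ ∈ boxI x (8 * N) ∧ M < dinf γ z} with hW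
  refine chain' hd hs1 hs2 (R := R) (W := W) ?_ (p := p) (q := q) ?_ ?_ S₁ S₂ hc1 hc2 ?_ ?_ hp hq
  · rintro γ ⟨hγ1, hγ2⟩
    refine ⟨hD γ (fun l => ?_) hγ2, fun y hy l => ?_⟩
    · have := hγ1 l
      omega
    · have := hγ1 l
      have := hy l
      omega
  · exact ⟨hpx, lt_of_lt_of_le hi (coord_le_dinf _ _ i)⟩
  · refine rch_three W p q k ρ ?_ ?_ ?_
    · intro w hw hw1 hw2
      refine ⟨fun l => ?_, lt_of_lt_of_le ?_ (coord_le_dinf _ _ i)⟩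
      · have := hpx l
        by_cases hl : l = k
        · subst hl
          omega
        · rw [hw l hl]
          omega
      · rw [hw i hki.symm]
        exact hi
    · intro w hw hw1
      refine ⟨fun l => ?_, lt_of_lt_of_le ?_ (coord_le_dinf _ _ k)⟩
      · have := hpx l
        have := hqx l
        by_cases hl : l = k
        · subst hl
          omega
        · have := hw1 l hl
          omega
      · rw [hw]
        exact hρ1
    · intro w hw hw1 hw2
      refine ⟨fun l => ?_, lt_of_lt_of_le ?_ (coord_le_dinf _ _ j)⟩
      · have := hqx l
        by_cases hl : l = k
        · subst hl
          omega
        · rw [hw l hl]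
          omega
      · rw [hw j hkj.symm]
        exact hj
  · obtain ⟨a, ha, b, hb, hab⟩ := hd1
    exact ⟨a, ha, b, hb, by omega⟩
  · obtain ⟨a, ha, b, hb, hab⟩ := hd2
    exact ⟨a, ha, b, hb, by omega⟩

/-- Linking in a shell, with one exceptional ball. -/
theorem link_shell {d ℓ₀ L₀ : ℕ} (hd : 3 ≤ d) {g : V d → Prop} {r s R M N : ℕ} (hs1 : 5 * r ≤ s)
    (hs2 : 2 * r + 1 ≤ s) (hr : 2 * r ≤ N) (hN : 4 * R + 4 * M + 4 ≤ N) (z : V d)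
    (hD : ∀ γ ∈ boxI (0 : V d) (9 * N), M < dinf γ z → Dp d ℓ₀ L₀ g r s R γ)
    (S₁ S₂ : Set (V d)) (hc1 : IsConnSet S₁) (hc2 : IsConnSet S₂)
    (h1 : ∃ a ∈ S₁, ∃ b ∈ S₁, dinf a 0 ≤ 8 * N ∧ 10 * N ≤ dinf b 0)
    (h2 : ∃ a ∈ S₂, ∃ b ∈ S₂, dinf a 0 ≤ 8 * N ∧ 10 * N ≤ dinf b 0) :
    Br d ℓ₀ L₀ g (boxI (0 : V d) (9 * N) \ boxI (0 : V d) (17 * N / 2)) S₁ S₂ := by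
  obtain ⟨ρ, hρ1, hρ2, hρ⟩ : ∃ ρ : ℕ, 17 * N / 2 + R + 1 ≤ ρ ∧ ρ + R ≤ 9 * N ∧
      ∀ γ : V d, dinf γ 0 = ρ → M < dinf γ z := by
    by_cases h : ∀ γ : V d, dinf γ 0 = 17 * N / 2 + R + 1 → M < dinf γ z
    · exact ⟨17 * N / 2 + R + 1, by omega, by omega, h⟩
    · push Not at h
      obtain ⟨γ, hγ1, hγ2⟩ := h
      refine ⟨17 * N / 2 + R + 1 + 2 * M + 1, by omega, by omega, fun γ' hγ' => ?_⟩
      have e1 := dinf_tri γ' z γ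
      have e2 := dinf_tri γ' γ 0
      rw [dinf_comm' z γ] at e1
      omega
  have cross : ∀ S : Set (V d), IsConnSet S →
      (∃ a ∈ S, ∃ b ∈ S, dinf a 0 ≤ 8 * N ∧ 10 * N ≤ dinf b 0) → ∃ p ∈ S, dinf p 0 = ρ := by
    rintro S hS ⟨a, ha, b, hb, h1, h2⟩
    refine ivt hS (fun x => dinf x 0) ?_ ha hb (by show dinf a 0 ≤ ρ; omega)
      (by show ρ ≤ dinf b 0; omega)
    intro x y hxy
    have e1 := dinf_tri y x 0
    have e2 := adj_dinf (adj_symm hxy)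
    show dinf y 0 ≤ dinf x 0 + 1
    omega
  have dm : ∀ S : Set (V d),
      (∃ a ∈ S, ∃ b ∈ S, dinf a 0 ≤ 8 * N ∧ 10 * N ≤ dinf b 0) →
      ∃ a ∈ S, ∃ b ∈ S, 2 * r ≤ dinf a b := by
    rintro S ⟨a, ha, b, hb, h1, h2⟩
    refine ⟨a, ha, b, hb, ?_⟩
    have := dinf_tri b a 0
    rw [dinf_comm' b a] at this
    omega
  obtain ⟨p, hp, hpρ⟩ := cross S₁ hc1 h1
  obtain ⟨q, hq, hqρ⟩ := cross S₂ hc2 h2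
  obtain ⟨i, hi⟩ := exists_coord hd p 0
  obtain ⟨j, hj⟩ := exists_coord hd q 0
  obtain ⟨k, hki, hkj⟩ := exists_third hd i j
  have hpl : ∀ l, (p l - (0 : V d) l).natAbs ≤ ρ := dinf_le.1 hpρ.le
  have hql : ∀ l, (q l - (0 : V d) l).natAbs ≤ ρ := dinf_le.1 hqρ.le
  have mk : ∀ (w : V d) (l : Fin d), (∀ l, (w l - (0 : V d) l).natAbs ≤ ρ) →
      ρ ≤ (w l - (0 : V d) l).natAbs → dinf w 0 = ρ := by
    intro w l h1 h2
    exact le_antisymm (dinf_le.2 h1) (h2.trans (coord_le_dinf _ _ l))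
  simp only [Pi.zero_apply, sub_zero] at hpl hql mk hi hj
  refine chain' hd hs1 hs2 (R := R) (W := {γ | dinf γ 0 = ρ}) ?_ (p := p) (q := q) hpρ ?_ S₁ S₂ hc1 hc2
    (dm _ h1) (dm _ h2) hp hq
  · intro γ hγ
    replace hγ : dinf γ 0 = ρ := hγ
    refine ⟨hD γ (mem_boxI.2 (by omega)) (hρ γ hγ), fun y hy => ⟨?_, fun hy' => ?_⟩⟩
    · rw [mem_boxI] at *
      have := dinf_tri y γ 0
      omega
    · rw [mem_boxI] at *
      have := dinf_tri γ y 0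
      rw [dinf_comm' γ y] at this
      omega
  · refine rch_three _ p q k ρ ?_ ?_ ?_
    · intro w hw hw1 hw2
      refine mk w i (fun l => ?_) ?_
      · have := hpl l
        by_cases hl : l = k
        · subst hl
          omega
        · rw [hw l hl]
          omega
      · rw [hw i hki.symm]
        omega
    · intro w hw hw1
      refine mk w k (fun l => ?_) (by omega)
      have := hpl l
      have := hql l
      by_cases hl : l = k
      · subst hl
        omega
      · have := hw1 l hl
        omega
    · intro w hw hw1 hw2
      refine mk w j (fun l => ?_) ?_
      · have := hql l
        by_cases hl : l = k
        · subst hl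
          omega
        · rw [hw l hl]
          omega
      · rw [hw j hkj.symm]
        omega


/-! ### Hierarchical bad events -/

/-- Centers at scale `n`. -/
def ctr {d : ℕ} (ℓ₀ L₀ n : ℕ) (u : V d) : V d := fun i => (Lsc ℓ₀ L₀ n : ℤ) * u i

/-- Lattice points at scale `n`. -/
def lp {d : ℕ} (ℓ₀ L₀ n : ℕ) (u : V d) : V d := fun i => (2 * (Lsc ℓ₀ L₀ n : ℤ) + 1) * u i

/-- Lattice indices near a center. -/
def near {d : ℕ} (ℓ₀ L₀ κ n : ℕ) (u : V d) : Finset (V d) :=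
  Fintype.piFinset fun i =>
    Finset.Icc (((Lsc ℓ₀ L₀ n : ℤ) * u i) / (2 * (Lsc ℓ₀ L₀ n : ℤ) + 1) - 11 * κ)
      (((Lsc ℓ₀ L₀ n : ℤ) * u i) / (2 * (Lsc ℓ₀ L₀ n : ℤ) + 1) + 11 * κ)

/-- Sub-centers of a center. -/
def subc {d : ℕ} (ℓ₀ κ : ℕ) (u : V d) : Finset (V d) :=
  Fintype.piFinset fun i =>
    Finset.Icc ((ℓ₀ : ℤ) * u i - 10 * κ * ℓ₀) ((ℓ₀ : ℤ) * u i + 10 * κ * ℓ₀)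

open Classical in
/-- Pairs of separated sub-centers. -/
def prs {d : ℕ} (ℓ₀ κ : ℕ) (u : V d) : Finset (V d × V d) :=
  (subc ℓ₀ κ u ×ˢ subc ℓ₀ κ u).filter fun p => 80 * κ ≤ dinf p.1 p.2

open Classical in
/-- Leaf configurations of the hierarchical trees. -/
def Tr {d : ℕ} (ℓ₀ L₀ κ : ℕ) : ℕ → V d → Finset (Finset (ℕ × V d))
  | 0, u => (near ℓ₀ L₀ κ 0 u).image fun w => {(0, w)}
  | (n + 1), u => ((near ℓ₀ L₀ κ (n + 1) u).image fun w => {(n + 1, w)}) ∪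
      (prs ℓ₀ κ u).biUnion fun p =>
        (Tr ℓ₀ L₀ κ n p.1 ×ˢ Tr ℓ₀ L₀ κ n p.2).image fun q => q.1 ∪ q.2

/-- Bad center. -/
def bad {d : ℕ} (ℓ₀ L₀ κ : ℕ) (e : ℕ → V d → Prop) (n : ℕ) (u : V d) : Prop :=
  ∃ A ∈ Tr ℓ₀ L₀ κ n u, ∀ a ∈ A, ¬ e a.1 (lp ℓ₀ L₀ a.1 a.2)

/-- Goodness of a `0`-box up to scale `n`. -/
def goodLe {d : ℕ} (ℓ₀ L₀ : ℕ) (e : ℕ → V d → Prop) (n : ℕ) (x : V d) : Prop :=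
  ∀ j, j ≤ n → ∀ y ∈ latt d ℓ₀ L₀ j, x ∈ boxI y (Lsc ℓ₀ L₀ j) → e j y

theorem Lsc_succ (ℓ₀ L₀ n : ℕ) : Lsc ℓ₀ L₀ (n + 1) = ℓ₀ * Lsc ℓ₀ L₀ n := by
  unfold Lsc
  rw [pow_succ]
  ring

theorem Lsc_pos {ℓ₀ L₀ : ℕ} (h1 : 1 ≤ ℓ₀) (h2 : 1 ≤ L₀) (n : ℕ) : 1 ≤ Lsc ℓ₀ L₀ n :=
  Nat.mul_pos (Nat.pow_pos h1) h2

theorem Lsc_mono {ℓ₀ L₀ : ℕ} (h1 : 1 ≤ ℓ₀) {m n : ℕ} (h : m ≤ n) :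
    Lsc ℓ₀ L₀ m ≤ Lsc ℓ₀ L₀ n :=
  Nat.mul_le_mul_right _ (Nat.pow_le_pow_right h1 h)

theorem near_mem {d ℓ₀ L₀ κ n : ℕ} (hκ : 20 ≤ κ) (hL : 1 ≤ Lsc ℓ₀ L₀ n) {u y : V d}
    (hy : y ∈ latt d ℓ₀ L₀ n)
    (h : ∀ i, (y i - ctr ℓ₀ L₀ n u i).natAbs ≤ 11 * (κ * Lsc ℓ₀ L₀ n)) :
    ∃ w ∈ near ℓ₀ L₀ κ n u, y = lp ℓ₀ L₀ n w := by
  choose w hw using hy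
  refine ⟨w, ?_, ?_⟩
  · rw [near, Fintype.mem_piFinset]
    intro i
    have h1 := h i
    rw [hw i, ctr] at h1
    generalize Lsc ℓ₀ L₀ n = L at *
    have e1 := Int.mul_ediv_add_emod ((L : ℤ) * u i) (2 * L + 1)
    have e2 := Int.emod_nonneg ((L : ℤ) * u i) (b := 2 * L + 1) (by omega)
    have e3 := Int.emod_lt_of_pos ((L : ℤ) * u i) (b := 2 * L + 1) (by omega)
    generalize ((L : ℤ) * u i) / (2 * L + 1) = w0 at *
    generalize ((L : ℤ) * u i) % (2 * L + 1) = t at *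
    rw [← e1] at h1
    have h2 : |((2 * L + 1 : ℕ) : ℤ) * w i - ((2 * L + 1) * w0 + t)| ≤ 11 * (κ * L) := by
      rw [Int.abs_eq_natAbs]; exact_mod_cast h1
    push_cast at h2
    obtain ⟨h3, h4⟩ := abs_le.1 h2
    have hL' : (1 : ℤ) ≤ L := by exact_mod_cast hL
    have hκ' : (20 : ℤ) ≤ κ := by exact_mod_cast hκ
    rw [Finset.mem_Icc]
    constructor
    · by_contra hc
      have : w i - w0 ≤ -(11 * κ + 1) := by omega
      nlinarith
    · by_contra hc
      have : w i - w0 ≥ 11 * κ + 1 := by omega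
      nlinarith
  · funext i
    rw [hw i, lp]
    push_cast
    ring

theorem near_bound {d ℓ₀ L₀ κ n : ℕ} (hκ : 20 ≤ κ) (hL : 1 ≤ Lsc ℓ₀ L₀ n) {u w : V d}
    (h : w ∈ near ℓ₀ L₀ κ n u) : dinf (lp ℓ₀ L₀ n w) (ctr ℓ₀ L₀ n u) ≤ 34 * (κ * Lsc ℓ₀ L₀ n) := by
  rw [dinf_le]
  intro i
  rw [near, Fintype.mem_piFinset] at h
  have h1 := Finset.mem_Icc.1 (h i)
  rw [lp, ctr]
  generalize Lsc ℓ₀ L₀ n = L at *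
  have e1 := Int.mul_ediv_add_emod ((L : ℤ) * u i) (2 * L + 1)
  have e2 := Int.emod_nonneg ((L : ℤ) * u i) (b := 2 * L + 1) (by omega)
  have e3 := Int.emod_lt_of_pos ((L : ℤ) * u i) (b := 2 * L + 1) (by omega)
  generalize ((L : ℤ) * u i) / (2 * L + 1) = w0 at *
  generalize ((L : ℤ) * u i) % (2 * L + 1) = t at *
  rw [← e1]
  have hL' : (1 : ℤ) ≤ L := by exact_mod_cast hL
  have hκ' : (20 : ℤ) ≤ κ := by exact_mod_cast hκ
  have : |(2 * (L : ℤ) + 1) * w i - ((2 * L + 1) * w0 + t)| ≤ 34 * (κ * L) := by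
    obtain ⟨h3, h4⟩ := h1
    rw [abs_le]
    constructor
    · nlinarith
    · nlinarith
  rw [Int.abs_eq_natAbs] at this
  exact_mod_cast this

theorem exists_ctr {d ℓ₀ L₀ n : ℕ} (hL : 1 ≤ Lsc ℓ₀ L₀ n) (γ : V d) :
    ∃ v : V d, ∀ i, (γ i - ctr ℓ₀ L₀ n v i).natAbs ≤ Lsc ℓ₀ L₀ n := by
  refine ⟨fun i => γ i / (Lsc ℓ₀ L₀ n : ℤ), fun i => ?_⟩
  rw [ctr]
  have e1 := Int.mul_ediv_add_emod (γ i) (Lsc ℓ₀ L₀ n)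
  have e2 := Int.emod_nonneg (γ i) (b := Lsc ℓ₀ L₀ n) (by omega)
  have e3 := Int.emod_lt_of_pos (γ i) (b := Lsc ℓ₀ L₀ n) (by omega)
  omega

theorem exists_latt {d ℓ₀ L₀ n : ℕ} (γ : V d) :
    ∃ y ∈ latt d ℓ₀ L₀ n, γ ∈ boxI y (Lsc ℓ₀ L₀ n) := by
  refine ⟨fun i => ((2 * Lsc ℓ₀ L₀ n + 1 : ℕ) : ℤ) *
    ((γ i + Lsc ℓ₀ L₀ n) / ((2 * Lsc ℓ₀ L₀ n + 1 : ℕ) : ℤ)), fun i => Dvd.intro _ rfl, fun i => ?_⟩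
  have e1 := Int.mul_ediv_add_emod (γ i + Lsc ℓ₀ L₀ n) ((2 * Lsc ℓ₀ L₀ n + 1 : ℕ) : ℤ)
  have e2 := Int.emod_nonneg (γ i + Lsc ℓ₀ L₀ n) (b := ((2 * Lsc ℓ₀ L₀ n + 1 : ℕ) : ℤ)) (by omega)
  have e3 := Int.emod_lt_of_pos (γ i + Lsc ℓ₀ L₀ n) (b := ((2 * Lsc ℓ₀ L₀ n + 1 : ℕ) : ℤ))
    (by omega)
  show (γ i - ((2 * Lsc ℓ₀ L₀ n + 1 : ℕ) : ℤ) *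
    ((γ i + Lsc ℓ₀ L₀ n) / ((2 * Lsc ℓ₀ L₀ n + 1 : ℕ) : ℤ))).natAbs ≤ Lsc ℓ₀ L₀ n
  generalize ((2 * Lsc ℓ₀ L₀ n + 1 : ℕ) : ℤ) *
    ((γ i + Lsc ℓ₀ L₀ n) / ((2 * Lsc ℓ₀ L₀ n + 1 : ℕ) : ℤ)) = A at *
  generalize (γ i + Lsc ℓ₀ L₀ n) % ((2 * Lsc ℓ₀ L₀ n + 1 : ℕ) : ℤ) = B at *
  omega

theorem not_bad_near {d ℓ₀ L₀ κ : ℕ} {e : ℕ → V d → Prop} {n : ℕ} {u : V d}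
    (h : ¬ bad ℓ₀ L₀ κ e n u) : ∀ w ∈ near ℓ₀ L₀ κ n u, e n (lp ℓ₀ L₀ n w) := by
  intro w hw
  by_contra hc
  refine h ⟨{(n, w)}, ?_, ?_⟩
  · cases n with
    | zero => exact Finset.mem_image_of_mem _ hw
    | succ n =>
      rw [Tr]
      exact Finset.mem_union_left _ (Finset.mem_image_of_mem _ hw)
  · intro a ha
    rw [Finset.mem_singleton] at ha
    subst ha
    exact hc

theorem not_bad_sub {d ℓ₀ L₀ κ : ℕ} {e : ℕ → V d → Prop} {n : ℕ} {u : V d}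
    (h : ¬ bad ℓ₀ L₀ κ e (n + 1) u) :
    ∃ v₀ : V d, ∀ v ∈ subc ℓ₀ κ u, bad ℓ₀ L₀ κ e n v → dinf v v₀ < 80 * κ := by
  by_cases hex : ∃ v₀ ∈ subc ℓ₀ κ u, bad ℓ₀ L₀ κ e n v₀
  · obtain ⟨v₀, hv₀, A, hA, hA'⟩ := hex
    refine ⟨v₀, ?_⟩
    rintro v hv ⟨B, hB, hB'⟩
    by_contra hc
    push Not at hc
    refine h ⟨B ∪ A, ?_, ?_⟩
    · rw [Tr]
      refine Finset.mem_union_right _ (Finset.mem_biUnion.2 ⟨(v, v₀), ?_, ?_⟩)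
      · rw [prs, Finset.mem_filter, Finset.mem_product]
        exact ⟨⟨hv, hv₀⟩, hc⟩
      · exact Finset.mem_image.2 ⟨(B, A), Finset.mem_product.2 ⟨hB, hA⟩, rfl⟩
    · intro a ha
      rcases Finset.mem_union.1 ha with ha | ha
      · exact hB' a ha
      · exact hA' a ha
  · push Not at hex
    exact ⟨0, fun v hv hb => absurd hb (hex v hv)⟩

/-- Outcome of the deterministic renormalisation at one center. -/
def Out (d ℓ₀ L₀ κ : ℕ) (e : ℕ → V d → Prop) (n : ℕ) (u : V d) : Prop :=
  ∃ (z : V d) (r s R M : ℕ), 5 * r ≤ s ∧ 2 * r + 1 ≤ s ∧ 2 * r ≤ κ * Lsc ℓ₀ L₀ n ∧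
    4 * R + 4 * M + 4 ≤ κ * Lsc ℓ₀ L₀ n ∧
    ∀ γ ∈ boxI (ctr ℓ₀ L₀ n u) (9 * (κ * Lsc ℓ₀ L₀ n)), M < dinf γ z →
      Dp d ℓ₀ L₀ (goodLe ℓ₀ L₀ e n) r s R γ

theorem out_zero {d ℓ₀ L₀ κ : ℕ} (hκ : 20 ≤ κ) (hL₀ : 1 ≤ L₀)
    (e : ℕ → V d → Prop) (u : V d) (h : ¬ bad ℓ₀ L₀ κ e 0 u) : Out d ℓ₀ L₀ κ e 0 u := by
  have hL : 1 ≤ Lsc ℓ₀ L₀ 0 := by simpa [Lsc] using hL₀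
  have hN : 20 * Lsc ℓ₀ L₀ 0 ≤ κ * Lsc ℓ₀ L₀ 0 := Nat.mul_le_mul_right _ hκ
  refine ⟨0, 0, 1, 2 * Lsc ℓ₀ L₀ 0 + 1, 0, by omega, by omega, by omega, by omega, ?_⟩
  rintro γ hγ - S₁ S₂ h1 h2 - - ⟨a, ha, -⟩ ⟨b, hb, -⟩
  have hnear := not_bad_near h
  choose bx hbx1 hbx2 using fun x : V d => exists_latt (ℓ₀ := ℓ₀) (L₀ := L₀) (n := 0) x
  have hmem : ∀ x, x ∈ Finset.Icc (fun i => γ i - 1 : V d) (fun i => γ i + 1) ↔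
      x ∈ boxI γ 1 := by
    intro x
    rw [Finset.mem_Icc]
    constructor
    · rintro ⟨h1, h2⟩ i
      have h1 := h1 i
      have h2 := h2 i
      simp only at h1 h2
      omega
    · intro h
      refine ⟨fun i => ?_, fun i => ?_⟩
      · have := h i
        show γ i - 1 ≤ x i
        omega
      · have := h i
        show x i ≤ γ i + 1
        omega
  set ℬ := (Finset.Icc (fun i => γ i - 1 : V d) (fun i => γ i + 1)).image bx with hℬ
  have hB : ∀ y ∈ ℬ, ∃ x ∈ boxI γ 1, bx x = y := by
    intro y hy
    obtain ⟨x, hx, hxy⟩ := Finset.mem_image.1 hy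
    exact ⟨x, (hmem x).1 hx, hxy⟩
  have hU : ∀ x ∈ boxI γ 1, boxI (bx x) (Lsc ℓ₀ L₀ 0) ⊆ ⋃ x ∈ ℬ, boxI x (Lsc ℓ₀ L₀ 0) := by
    intro x hx
    have : bx x ∈ ℬ := Finset.mem_image_of_mem _ ((hmem x).2 hx)
    exact Set.subset_biUnion_of_mem (u := fun x => boxI x (Lsc ℓ₀ L₀ 0)) this
  have hU1 : boxI γ 1 ⊆ ⋃ x ∈ ℬ, boxI x (Lsc ℓ₀ L₀ 0) := fun x hx => hU x hx (hbx2 x)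
  refine ⟨ℬ, ⟨?_, ?_, ?_, ?_, ?_⟩, ?_⟩
  · intro y hy
    obtain ⟨x, -, rfl⟩ := hB y hy
    exact hbx1 x
  · refine Set.iUnion₂_subset fun y hy => ?_
    obtain ⟨x, hx, rfl⟩ := hB y hy
    intro t ht i
    have := hx i
    have := ht i
    have := hbx2 x i
    omega
  · refine isConnSet_of_root (p := γ) (hU1 (self_mem_boxI _ _)) ?_
    intro t ht
    obtain ⟨y, hy, hty⟩ := Set.mem_iUnion₂.1 ht
    obtain ⟨x, hx, rfl⟩ := hB y hy
    exact ((isConnSet_iff.1 (boxI_conn γ 1) γ (self_mem_boxI _ _) x hx).mono hU1).trans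
      ((isConnSet_iff.1 (boxI_conn _ _) x (hbx2 x) t hty).mono (hU x hx))
  · exact ⟨a, hU1 (h1 ha), ha⟩
  · exact ⟨b, hU1 (h2 hb), hb⟩
  · intro y hy j hj t ht hyt
    obtain ⟨x, hx, rfl⟩ := hB y hy
    have : j = 0 := by omega
    subst this
    obtain ⟨w, hw, rfl⟩ := near_mem (κ := κ) (u := u) hκ hL ht (fun i => by
      have := hγ i
      have := hx i
      have := hbx2 x i
      have := hyt i
      omega)
    exact hnear w hw

theorem out_succ {d ℓ₀ L₀ κ : ℕ} (hd : 3 ≤ d) (hκ : 20 ≤ κ) (hℓ : 1000 ≤ ℓ₀) (hL₀ : 1 ≤ L₀)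
    (e : ℕ → V d → Prop) (n : ℕ)
    (ih : ∀ u : V d, ¬ bad ℓ₀ L₀ κ e n u → Out d ℓ₀ L₀ κ e n u) (u : V d)
    (h : ¬ bad ℓ₀ L₀ κ e (n + 1) u) : Out d ℓ₀ L₀ κ e (n + 1) u := by
  have hL : 1 ≤ Lsc ℓ₀ L₀ n := Lsc_pos (by omega) hL₀ n
  have hL' : 1 ≤ Lsc ℓ₀ L₀ (n + 1) := Lsc_pos (by omega) hL₀ (n + 1)
  obtain ⟨v₀, hv₀⟩ := not_bad_sub h
  have hnear := not_bad_near h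
  have hN : 20 * Lsc ℓ₀ L₀ n ≤ κ * Lsc ℓ₀ L₀ n := Nat.mul_le_mul_right _ hκ
  have hN' : 1000 * (κ * Lsc ℓ₀ L₀ n) ≤ κ * Lsc ℓ₀ L₀ (n + 1) := by
    rw [Lsc_succ]
    calc 1000 * (κ * Lsc ℓ₀ L₀ n) ≤ ℓ₀ * (κ * Lsc ℓ₀ L₀ n) := Nat.mul_le_mul_right _ hℓ
      _ = _ := by ring
  have hN2 : 20 * Lsc ℓ₀ L₀ (n + 1) ≤ κ * Lsc ℓ₀ L₀ (n + 1) := Nat.mul_le_mul_right _ hκ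
  refine ⟨ctr ℓ₀ L₀ n v₀, κ * Lsc ℓ₀ L₀ n, 7 * (κ * Lsc ℓ₀ L₀ n), 11 * (κ * Lsc ℓ₀ L₀ n),
    81 * (κ * Lsc ℓ₀ L₀ n), by omega, by omega, by omega, by omega, ?_⟩
  intro γ hγ hγM
  obtain ⟨v, hv⟩ := exists_ctr hL γ
  have hvsub : v ∈ subc ℓ₀ κ u := by
    rw [subc, Fintype.mem_piFinset]
    intro i
    have e1 := hv i
    have e2 := hγ i
    rw [ctr] at e1 e2
    rw [Lsc_succ] at e2
    generalize Lsc ℓ₀ L₀ n = L at *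
    have e3 : |(L : ℤ) * v i - ℓ₀ * L * u i| ≤ 9 * (κ * (ℓ₀ * L)) + L := by
      have : ((L : ℤ) * v i - ((ℓ₀ * L : ℕ) : ℤ) * u i).natAbs ≤ 9 * (κ * (ℓ₀ * L)) + L := by omega
      have h' : (((L : ℤ) * v i - ((ℓ₀ * L : ℕ) : ℤ) * u i).natAbs : ℤ) ≤
        ((9 * (κ * (ℓ₀ * L)) + L : ℕ) : ℤ) := by exact_mod_cast this
      rw [← Int.abs_eq_natAbs] at h'
      push_cast at h'
      exact h'
    have e4 : (L : ℤ) * |v i - ℓ₀ * u i| ≤ L * (9 * (κ * ℓ₀) + 1) := by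
      calc (L : ℤ) * |v i - ℓ₀ * u i| = |(L : ℤ) * (v i - ℓ₀ * u i)| := by
            rw [abs_mul, abs_of_nonneg (by omega : (0 : ℤ) ≤ L)]
        _ = |(L : ℤ) * v i - ℓ₀ * L * u i| := by ring_nf
        _ ≤ _ := e3
        _ = _ := by ring
    have e5 := le_of_mul_le_mul_left e4 (by omega : (0 : ℤ) < L)
    have e6 : (1 : ℤ) ≤ κ * ℓ₀ := by
      have : 1 ≤ κ * ℓ₀ := Nat.mul_pos (by omega) (by omega)
      exact_mod_cast this
    obtain ⟨e7, e8⟩ := abs_le.1 e5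
    rw [Finset.mem_Icc]
    constructor
    · linarith
    · linarith
  have hvgood : ¬ bad ℓ₀ L₀ κ e n v := by
    intro hb
    have h1 := hv₀ v hvsub hb
    have h2 : dinf γ (ctr ℓ₀ L₀ n v₀) ≤ 81 * (κ * Lsc ℓ₀ L₀ n) := by
      rw [dinf_le]
      intro i
      have e1 := hv i
      have e2 := coord_le_dinf v v₀ i
      rw [ctr] at e1 ⊢
      have e3 : ((Lsc ℓ₀ L₀ n : ℤ) * v i - (Lsc ℓ₀ L₀ n : ℤ) * v₀ i).natAbs ≤
          80 * (κ * Lsc ℓ₀ L₀ n) := by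
        rw [← mul_sub, Int.natAbs_mul, Int.natAbs_natCast]
        calc _ ≤ Lsc ℓ₀ L₀ n * (80 * κ) := Nat.mul_le_mul_left _ (by omega)
          _ = _ := by ring
      omega
    omega
  obtain ⟨z, r, s, R, M, c1, c2, c3, c4, hD⟩ := ih v hvgood
  intro S₁ S₂ h1 h2 hc1 hc2 hd1 hd2
  refine (link_box hd c1 c2 c3 c4 _ z hD S₁ S₂ ?_ ?_ hc1 hc2 hd1 hd2).mono ?_ ?_
    subset_rfl subset_rfl
  · intro x hx i
    have := h1 hx i
    have := hv i
    omega
  · intro x hx i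
    have := h2 hx i
    have := hv i
    omega
  · intro x hx hg j hj y hy hxy
    rcases Nat.lt_or_ge n j with hj' | hj'
    · have : j = n + 1 := by omega
      subst this
      obtain ⟨w, hw, rfl⟩ := near_mem (κ := κ) (u := u) hκ hL' hy (fun i => by
        have := hγ i
        have := hx i
        have := hv i
        have := hxy i
        omega)
      exact hnear w hw
    · exact hg j hj' y hy hxy
  · intro x hx i
    have := hx i
    have := hv i
    omega

theorem out_all {d ℓ₀ L₀ κ : ℕ} (hd : 3 ≤ d) (hκ : 20 ≤ κ) (hℓ : 1000 ≤ ℓ₀) (hL₀ : 1 ≤ L₀)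
    (e : ℕ → V d → Prop) (n : ℕ) :
    ∀ u : V d, ¬ bad ℓ₀ L₀ κ e n u → Out d ℓ₀ L₀ κ e n u := by
  induction n with
  | zero => exact out_zero hκ hL₀ e
  | succ n ih => exact out_succ hd hκ hℓ hL₀ e n ih


theorem dinf_ctr {d ℓ₀ L₀ : ℕ} (hd : 3 ≤ d) (n : ℕ) (v w : V d) :
    Lsc ℓ₀ L₀ n * dinf v w ≤ dinf (ctr ℓ₀ L₀ n v) (ctr ℓ₀ L₀ n w) := by
  obtain ⟨i, hi⟩ := exists_coord hd v w
  refine le_trans ?_ (coord_le_dinf _ _ i)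
  rw [ctr, ctr, ← mul_sub, Int.natAbs_mul, Int.natAbs_natCast, hi]

theorem ctr_dinf {d ℓ₀ L₀ : ℕ} (n : ℕ) (v w : V d) :
    dinf (ctr ℓ₀ L₀ n v) (ctr ℓ₀ L₀ n w) ≤ Lsc ℓ₀ L₀ n * dinf v w := by
  rw [dinf_le]
  intro i
  rw [ctr, ctr, ← mul_sub, Int.natAbs_mul, Int.natAbs_natCast]
  exact Nat.mul_le_mul_left _ (coord_le_dinf v w i)

theorem lp_dinf {d ℓ₀ L₀ : ℕ} (n : ℕ) (v w : V d) :
    dinf (lp ℓ₀ L₀ n v) (lp ℓ₀ L₀ n w) ≤ (2 * Lsc ℓ₀ L₀ n + 1) * dinf v w := by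
  rw [dinf_le]
  intro i
  rw [lp, lp, ← mul_sub, Int.natAbs_mul]
  exact Nat.mul_le_mul (by omega) (coord_le_dinf v w i)

theorem Tr_zero {d ℓ₀ L₀ κ : ℕ} {u : V d} {A : Finset (ℕ × V d)} (h : A ∈ Tr ℓ₀ L₀ κ 0 u) :
    ∃ w ∈ near ℓ₀ L₀ κ 0 u, A = {(0, w)} := by
  rw [Tr] at h
  obtain ⟨w, hw, rfl⟩ := Finset.mem_image.1 h
  exact ⟨w, hw, rfl⟩

open Classical in
theorem Tr_succ {d ℓ₀ L₀ κ n : ℕ} {u : V d} {A : Finset (ℕ × V d)}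
    (h : A ∈ Tr ℓ₀ L₀ κ (n + 1) u) :
    (∃ w ∈ near ℓ₀ L₀ κ (n + 1) u, A = {(n + 1, w)}) ∨
    ∃ v ∈ subc ℓ₀ κ u, ∃ w ∈ subc ℓ₀ κ u, 80 * κ ≤ dinf v w ∧
      ∃ B ∈ Tr ℓ₀ L₀ κ n v, ∃ B' ∈ Tr ℓ₀ L₀ κ n w, A = B ∪ B' := by
  rw [Tr] at h
  rcases Finset.mem_union.1 h with h | h
  · obtain ⟨w, hw, rfl⟩ := Finset.mem_image.1 h
    exact Or.inl ⟨w, hw, rfl⟩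
  · right
    obtain ⟨p, hp, h⟩ := Finset.mem_biUnion.1 h
    obtain ⟨q, hq, rfl⟩ := Finset.mem_image.1 h
    rw [prs, Finset.mem_filter, Finset.mem_product] at hp
    rw [Finset.mem_product] at hq
    exact ⟨p.1, hp.1.1, p.2, hp.1.2, hp.2, q.1, hq.1, q.2, hq.2, rfl⟩

theorem Tr_loc {d ℓ₀ L₀ κ : ℕ} (hκ : 20 ≤ κ) (hℓ : 1000 ≤ ℓ₀) (hL₀ : 1 ≤ L₀)
    (n : ℕ) : ∀ u : V d, ∀ A ∈ Tr ℓ₀ L₀ κ n u, ∀ a ∈ A, a.1 ≤ n ∧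
      dinf (lp ℓ₀ L₀ a.1 a.2) (ctr ℓ₀ L₀ n u) ≤ 34 * (κ * Lsc ℓ₀ L₀ n) := by
  induction n with
  | zero =>
    intro u A hA a ha
    obtain ⟨w, hw, rfl⟩ := Tr_zero hA
    rw [Finset.mem_singleton] at ha
    subst ha
    exact ⟨le_rfl, near_bound hκ (Lsc_pos (by omega) hL₀ 0) hw⟩
  | succ n ih =>
    intro u A hA a ha
    rcases Tr_succ hA with ⟨w, hw, rfl⟩ | ⟨v, hv, w, hw, -, B, hB, B', hB', rfl⟩
    · rw [Finset.mem_singleton] at ha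
      subst ha
      exact ⟨le_rfl, near_bound hκ (Lsc_pos (by omega) hL₀ _) hw⟩
    · have key : ∀ v ∈ subc ℓ₀ κ u, dinf (ctr ℓ₀ L₀ n v) (ctr ℓ₀ L₀ (n + 1) u) ≤
          10 * (κ * Lsc ℓ₀ L₀ (n + 1)) := by
        intro v hv
        have e : ctr ℓ₀ L₀ (n + 1) u = ctr ℓ₀ L₀ n (fun i => (ℓ₀ : ℤ) * u i) := by
          funext i
          rw [ctr, ctr, Lsc_succ]
          push_cast
          ring
        rw [e]
        refine (ctr_dinf n _ _).trans ?_
        have : dinf v (fun i => (ℓ₀ : ℤ) * u i) ≤ 10 * κ * ℓ₀ := by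
          rw [dinf_le]
          intro i
          rw [subc, Fintype.mem_piFinset] at hv
          have := Finset.mem_Icc.1 (hv i)
          have h' : |v i - (ℓ₀ : ℤ) * u i| ≤ 10 * κ * ℓ₀ := by
            rw [abs_le]; constructor <;> linarith
          rw [Int.abs_eq_natAbs] at h'
          exact_mod_cast h'
        calc _ ≤ Lsc ℓ₀ L₀ n * (10 * κ * ℓ₀) := Nat.mul_le_mul_left _ this
          _ = _ := by rw [Lsc_succ]; ring
      have hN' : 1000 * (κ * Lsc ℓ₀ L₀ n) ≤ κ * Lsc ℓ₀ L₀ (n + 1) := by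
        rw [Lsc_succ]
        calc 1000 * (κ * Lsc ℓ₀ L₀ n) ≤ ℓ₀ * (κ * Lsc ℓ₀ L₀ n) := Nat.mul_le_mul_right _ hℓ
          _ = _ := by ring
      rcases Finset.mem_union.1 ha with ha | ha
      · have h1 := ih v B hB a ha
        have h2 := key v hv
        have h3 := dinf_tri (lp ℓ₀ L₀ a.1 a.2) (ctr ℓ₀ L₀ n v) (ctr ℓ₀ L₀ (n + 1) u)
        exact ⟨by omega, by omega⟩
      · have h1 := ih w B' hB' a ha
        have h2 := key w hw
        have h3 := dinf_tri (lp ℓ₀ L₀ a.1 a.2) (ctr ℓ₀ L₀ n w) (ctr ℓ₀ L₀ (n + 1) u)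
        exact ⟨by omega, by omega⟩

theorem Tr_far {d ℓ₀ L₀ κ : ℕ} (hd : 3 ≤ d) (hκ : 20 ≤ κ) (hℓ : 1000 ≤ ℓ₀) (hL₀ : 1 ≤ L₀)
    {n : ℕ} {v w : V d} (hvw : 80 * κ ≤ dinf v w) {A B : Finset (ℕ × V d)}
    (hA : A ∈ Tr ℓ₀ L₀ κ n v) (hB : B ∈ Tr ℓ₀ L₀ κ n w) {a b : ℕ × V d} (ha : a ∈ A) (hb : b ∈ B)
    (hab : a.1 = b.1) : κ ≤ dinf a.2 b.2 := by
  obtain ⟨a1, a2⟩ := Tr_loc hκ hℓ hL₀ n v A hA a ha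
  obtain ⟨b1, b2⟩ := Tr_loc hκ hℓ hL₀ n w B hB b hb
  have h1 := dinf_ctr (ℓ₀ := ℓ₀) (L₀ := L₀) hd n v w
  have h2 := dinf_tri (ctr ℓ₀ L₀ n v) (lp ℓ₀ L₀ a.1 a.2) (ctr ℓ₀ L₀ n w)
  have h3 := dinf_tri (lp ℓ₀ L₀ a.1 a.2) (lp ℓ₀ L₀ b.1 b.2) (ctr ℓ₀ L₀ n w)
  rw [dinf_comm' (ctr ℓ₀ L₀ n v) (lp ℓ₀ L₀ a.1 a.2)] at h2
  rw [← hab] at h3 b2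
  have h4 := lp_dinf (ℓ₀ := ℓ₀) (L₀ := L₀) a.1 a.2 b.2
  have h5 : Lsc ℓ₀ L₀ n * (80 * κ) ≤ Lsc ℓ₀ L₀ n * dinf v w := Nat.mul_le_mul_left _ hvw
  have hL := Lsc_pos (L₀ := L₀) (by omega : 1 ≤ ℓ₀) hL₀ n
  have hm := Lsc_mono (L₀ := L₀) (by omega : 1 ≤ ℓ₀) a1
  have h6 : (2 * Lsc ℓ₀ L₀ a.1 + 1) * dinf a.2 b.2 ≤ (3 * Lsc ℓ₀ L₀ n) * dinf a.2 b.2 :=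
    Nat.mul_le_mul_right _ (by omega)
  by_contra hc
  have h7 : (3 * Lsc ℓ₀ L₀ n) * dinf a.2 b.2 ≤ (3 * Lsc ℓ₀ L₀ n) * κ :=
    Nat.mul_le_mul_left _ (by omega)
  have h8 : 1 ≤ κ * Lsc ℓ₀ L₀ n := Nat.mul_pos (by omega) hL
  nlinarith

theorem Tr_disj {d ℓ₀ L₀ κ : ℕ} (hd : 3 ≤ d) (hκ : 20 ≤ κ) (hℓ : 1000 ≤ ℓ₀) (hL₀ : 1 ≤ L₀)
    {n : ℕ} {v w : V d} (hvw : 80 * κ ≤ dinf v w) {A B : Finset (ℕ × V d)}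
    (hA : A ∈ Tr ℓ₀ L₀ κ n v) (hB : B ∈ Tr ℓ₀ L₀ κ n w) : Disjoint A B := by
  rw [Finset.disjoint_left]
  intro a ha hb
  have h := Tr_far hd hκ hℓ hL₀ hvw hA hB ha hb rfl
  have : dinf a.2 a.2 ≤ 0 := dinf_le.2 (by simp)
  omega

theorem Tr_sep {d ℓ₀ L₀ κ : ℕ} (hd : 3 ≤ d) (hκ : 20 ≤ κ) (hℓ : 1000 ≤ ℓ₀) (hL₀ : 1 ≤ L₀)
    (n : ℕ) : ∀ u : V d, ∀ A ∈ Tr ℓ₀ L₀ κ n u, ∀ a ∈ A, ∀ b ∈ A, a.1 = b.1 → a.2 ≠ b.2 →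
      κ ≤ 2 * dinf a.2 b.2 := by
  induction n with
  | zero =>
    intro u A hA a ha b hb _ hab
    obtain ⟨w, hw, rfl⟩ := Tr_zero hA
    rw [Finset.mem_singleton] at ha hb
    subst ha; subst hb
    exact absurd rfl hab
  | succ n ih =>
    intro u A hA a ha b hb h1 hab
    rcases Tr_succ hA with ⟨w, hw, rfl⟩ | ⟨v, hv, w, hw, hvw, B, hB, B', hB', rfl⟩
    · rw [Finset.mem_singleton] at ha hb
      subst ha; subst hb
      exact absurd rfl hab
    · rcases Finset.mem_union.1 ha with ha | ha <;> rcases Finset.mem_union.1 hb with hb | hb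
      · exact ih v B hB a ha b hb h1 hab
      · have := Tr_far hd hκ hℓ hL₀ hvw hB hB' ha hb h1
        omega
      · have := Tr_far hd hκ hℓ hL₀ hvw hB hB' hb ha h1.symm
        rw [dinf_comm'] at this
        omega
      · exact ih w B' hB' a ha b hb h1 hab

theorem sum_image_le' {α β : Type*} [DecidableEq β] (s : Finset α) (g : α → β)
    (f : β → ENNReal) : ∑ b ∈ s.image g, f b ≤ ∑ a ∈ s, f (g a) := by
  classical
  induction s using Finset.induction_on with
  | empty => simp
  | insert a s ha ih =>
    rw [Finset.image_insert, Finset.sum_insert ha]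
    by_cases h : g a ∈ s.image g
    · rw [Finset.insert_eq_of_mem h]
      exact ih.trans le_add_self
    · rw [Finset.sum_insert h]
      gcongr

theorem sum_biUnion_le' {α β : Type*} [DecidableEq β] (s : Finset α) (t : α → Finset β)
    (f : β → ENNReal) : ∑ b ∈ s.biUnion t, f b ≤ ∑ a ∈ s, ∑ b ∈ t a, f b := by
  classical
  induction s using Finset.induction_on with
  | empty => simp
  | insert a s ha ih =>
    rw [Finset.biUnion_insert, Finset.sum_insert ha]
    refine le_trans ?_ (add_le_add_right ih _)
    rw [← Finset.sum_union_inter]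
    exact le_self_add

theorem near_card {d : ℕ} (ℓ₀ L₀ κ n : ℕ) (u : V d) :
    (near ℓ₀ L₀ κ n u).card = (22 * κ + 1) ^ d := by
  rw [near, Fintype.card_piFinset]
  simp only [Int.card_Icc]
  rw [Finset.prod_congr rfl (g := fun _ => 22 * κ + 1)]
  · simp
  · intro i _
    omega

theorem prs_card {d : ℕ} (ℓ₀ κ : ℕ) (u : V d) :
    (prs ℓ₀ κ u).card ≤ ((20 * κ * ℓ₀ + 1) ^ d) ^ 2 := by
  have : (subc ℓ₀ κ u).card = (20 * κ * ℓ₀ + 1) ^ d := by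
    rw [subc, Fintype.card_piFinset]
    simp only [Int.card_Icc]
    rw [Finset.prod_congr rfl (g := fun _ => 20 * κ * ℓ₀ + 1)]
    · simp
    · intro i _
      have : (ℓ₀ : ℤ) * u i + 10 * κ * ℓ₀ + 1 - (ℓ₀ * u i - 10 * κ * ℓ₀) =
          ((20 * κ * ℓ₀ + 1 : ℕ) : ℤ) := by
        push_cast; ring
      rw [this]
      exact Int.toNat_natCast _
  rw [prs]
  refine (Finset.card_filter_le _ _).trans ?_
  rw [Finset.card_product, this, sq]

/-- Weighted count of the leaf configurations. -/
theorem Tr_sum {d ℓ₀ L₀ κ : ℕ} (hd : 3 ≤ d) (hκ : 20 ≤ κ) (hℓ : 1000 ≤ ℓ₀) (hL₀ : 1 ≤ L₀)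
    (p b : ℕ → ENNReal) (h0 : ((22 * κ + 1) ^ d : ℕ) * p 0 ≤ b 0)
    (hs : ∀ n, ((22 * κ + 1) ^ d : ℕ) * p (n + 1) +
      (((20 * κ * ℓ₀ + 1) ^ d) ^ 2 : ℕ) * (b n * b n) ≤ b (n + 1)) (n : ℕ) :
    ∀ u : V d, ∑ A ∈ Tr ℓ₀ L₀ κ n u, ∏ a ∈ A, p a.1 ≤ b n := by
  classical
  have hnear : ∀ n (u : V d), ∑ A ∈ (near ℓ₀ L₀ κ n u).image (fun w => ({(n, w)} : Finset (ℕ × V d))),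
      ∏ a ∈ A, p a.1 ≤ ((22 * κ + 1) ^ d : ℕ) * p n := by
    intro n u
    refine (sum_image_le' _ _ _).trans ?_
    simp only [Finset.prod_singleton, Finset.sum_const, nsmul_eq_mul, near_card]
    exact le_rfl
  induction n with
  | zero =>
    intro u
    refine le_trans ?_ h0
    have e : Tr ℓ₀ L₀ κ 0 u =
        (near ℓ₀ L₀ κ 0 u).image (fun w => ({(0, w)} : Finset (ℕ × V d))) := by rw [Tr]
    rw [e]
    exact hnear 0 u
  | succ n ih =>
    intro u
    refine le_trans ?_ (hs n)
    have e : Tr ℓ₀ L₀ κ (n + 1) u =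
      ((near ℓ₀ L₀ κ (n + 1) u).image fun w => ({(n + 1, w)} : Finset (ℕ × V d))) ∪
      (prs ℓ₀ κ u).biUnion fun p =>
        (Tr ℓ₀ L₀ κ n p.1 ×ˢ Tr ℓ₀ L₀ κ n p.2).image fun q => q.1 ∪ q.2 := by
      rw [Tr]
    rw [e]
    have hun : ∀ (X Y : Finset (Finset (ℕ × V d))) (f : Finset (ℕ × V d) → ENNReal),
        ∑ A ∈ X ∪ Y, f A ≤ ∑ A ∈ X, f A + ∑ A ∈ Y, f A := by
      intro X Y f
      rw [← Finset.sum_union_inter]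
      exact le_self_add
    refine (hun _ _ _).trans (add_le_add (hnear (n + 1) u) ?_)
    refine (sum_biUnion_le' _ _ _).trans ?_
    refine (Finset.sum_le_card_nsmul _ _ (b n * b n) ?_).trans ?_
    · intro q hq
      rw [prs, Finset.mem_filter] at hq
      refine (sum_image_le' _ _ _).trans ?_
      rw [Finset.sum_product]
      calc _ = ∑ A ∈ Tr ℓ₀ L₀ κ n q.1, ∑ B ∈ Tr ℓ₀ L₀ κ n q.2,
            (∏ a ∈ A, p a.1) * ∏ a ∈ B, p a.1 := by
            refine Finset.sum_congr rfl fun A hA => Finset.sum_congr rfl fun B hB => ?_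
            exact Finset.prod_union (Tr_disj hd hκ hℓ hL₀ hq.2 hA hB)
        _ = (∑ A ∈ Tr ℓ₀ L₀ κ n q.1, ∏ a ∈ A, p a.1) *
            ∑ B ∈ Tr ℓ₀ L₀ κ n q.2, ∏ a ∈ B, p a.1 := by
            rw [Finset.sum_mul_sum]
        _ ≤ _ := mul_le_mul' (ih _) (ih _)
    · rw [nsmul_eq_mul]
      gcongr
      exact_mod_cast prs_card ℓ₀ κ u


/-- The events of the two families, indexed by the level. -/
def Ev {Ω : Type*} {d : ℕ} (F : V d → Set Ω) (H : ℕ → V d → Set Ω) (j : ℕ) (y : V d) : Set Ω :=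
  if j = 0 then F y else H j y

/-- Good configurations at level `n` and above. -/
def Okc {Ω : Type*} {d : ℕ} (ℓ₀ L₀ κ : ℕ) (F : V d → Set Ω) (H : ℕ → V d → Set Ω) (n : ℕ)
    (ω : Ω) : Prop :=
  ¬ bad ℓ₀ L₀ κ (fun j (y : V d) => ω ∈ Ev F H j y) n 0 ∧
    ∀ j, n < j → ∀ w ∈ near ℓ₀ L₀ κ j (0 : V d), ω ∈ Ev F H j (lp ℓ₀ L₀ j w)

theorem good_of_br {Ω : Type*} {d ℓ₀ L₀ κ : ℕ} (hκ : 20 ≤ κ) (hℓ : 1000 ≤ ℓ₀) (hL₀ : 1 ≤ L₀)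
    {F : V d → Set Ω} {H : ℕ → V d → Set Ω} {n : ℕ} {ω : Ω} (hok : Okc ℓ₀ L₀ κ F H n ω)
    {Sg S₁ S₂ : Set (V d)} (hSg : Sg ⊆ boxI (0 : V d) (10 * (κ * Lsc ℓ₀ L₀ n)))
    (h : Br d ℓ₀ L₀ (goodLe ℓ₀ L₀ (fun j (y : V d) => ω ∈ Ev F H j y) n) Sg S₁ S₂) :
    ∃ ℬ : Finset (V d), Is0Bridge d ℓ₀ L₀ Sg S₁ S₂ ℬ ∧ Good0 d ℓ₀ L₀ F H ℬ ω := by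
  obtain ⟨ℬ, hB, hG⟩ := h
  refine ⟨ℬ, hB, ?_⟩
  intro x hx
  have hxS : x ∈ Sg := hB.2.1 (Set.mem_biUnion hx (self_mem_boxI x _))
  have hx0 := hSg hxS
  refine ⟨?_, ?_⟩
  · have := hG x hx 0 (Nat.zero_le _) x (hB.1 x hx) (self_mem_boxI x _)
    simpa [Ev] using this
  · intro j hj y hy hxy
    have hj0 : j ≠ 0 := by omega
    suffices ω ∈ Ev F H j y by simpa [Ev, hj0] using this
    by_cases hjn : j ≤ n
    · exact hG x hx j hjn y hy hxy
    · have hL := Lsc_pos (by omega : 1 ≤ ℓ₀) hL₀ j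
      have hm := Nat.mul_le_mul_left κ (Lsc_mono (L₀ := L₀) (by omega : 1 ≤ ℓ₀) (by omega : n ≤ j))
      have hm2 := Nat.mul_le_mul_right (Lsc ℓ₀ L₀ j) hκ
      obtain ⟨w, hw, rfl⟩ := near_mem (κ := κ) (u := 0) hκ hL hy (fun i => by
        have h1 := hx0 i
        have h2 := hxy i
        simp only [ctr, Pi.zero_apply, mul_zero, sub_zero] at *
        omega)
      exact hok.2 j (by omega) w hw

theorem ok_II {Ω : Type*} {d ℓ₀ L₀ κ : ℕ} (hd : 3 ≤ d) (hκ : 20 ≤ κ) (hℓ : 1000 ≤ ℓ₀)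
    (hL₀ : 1 ≤ L₀)
    {F : V d → Set Ω} {H : ℕ → V d → Set Ω} {n : ℕ} {ω : Ω} (hok : Okc ℓ₀ L₀ κ F H n ω) :
    ω ∈ G0EventII d ℓ₀ L₀ κ F H n := by
  intro S₁ S₂ h1 h2 hc1 hc2 hd1 hd2
  obtain ⟨z, r, s, R, M, e1, e2, e3, e4, hD⟩ := out_all hd hκ hℓ hL₀ _ n _ hok.1
  have hc0 : ctr ℓ₀ L₀ n (0 : V d) = 0 := by funext i; simp [ctr]
  rw [hc0] at hD
  rw [mul_assoc] at h1 h2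
  rw [mul_assoc]
  have dc : ∀ S : Set (V d), diamGE S ((κ * Lsc ℓ₀ L₀ n : ℕ) : ℝ) →
      ∃ a ∈ S, ∃ b ∈ S, κ * Lsc ℓ₀ L₀ n ≤ dinf a b := by
    rintro S ⟨a, ha, b, hb, h⟩
    exact ⟨a, ha, b, hb, by exact_mod_cast h⟩
  exact good_of_br hκ hℓ hL₀ hok (le_refl _)
    (link_box hd e1 e2 e3 e4 0 z hD S₁ S₂ h1 h2 hc1 hc2 (dc _ hd1) (dc _ hd2))

theorem ok_I {Ω : Type*} {d ℓ₀ L₀ κ : ℕ} (hd : 3 ≤ d) (hκ : 20 ≤ κ) (hℓ : 1000 ≤ ℓ₀)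
    (hL₀ : 1 ≤ L₀)
    {F : V d → Set Ω} {H : ℕ → V d → Set Ω} {n : ℕ} {ω : Ω} (hok : Okc ℓ₀ L₀ κ F H n ω) :
    ω ∈ G0EventI d ℓ₀ L₀ κ F H n := by
  intro S₁ S₂ h1 h2 ha1 ha2
  obtain ⟨z, r, s, R, M, e1, e2, e3, e4, hD⟩ := out_all hd hκ hℓ hL₀ _ n _ hok.1
  have hc0 : ctr ℓ₀ L₀ n (0 : V d) = 0 := by funext i; simp [ctr]
  rw [hc0] at hD
  have hS : SgAt d ℓ₀ L₀ κ n 0 = boxI (0 : V d) (9 * (κ * Lsc ℓ₀ L₀ n)) \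
      boxI (0 : V d) (17 * (κ * Lsc ℓ₀ L₀ n) / 2) := by
    rw [SgAt, mul_assoc, mul_assoc]
  have cm : ∀ S : Set (V d), AdmissibleAt d ℓ₀ L₀ κ n 0 S → ∃ X, X ⊆ S ∧ IsConnSet X ∧
      ∃ a ∈ X, ∃ b ∈ X, dinf a 0 ≤ 8 * (κ * Lsc ℓ₀ L₀ n) ∧ 10 * (κ * Lsc ℓ₀ L₀ n) ≤ dinf b 0 := by
    rintro S ⟨hA, x, hx, a, hax, ha⟩
    obtain ⟨b, hbx, hb, z, hz, hbz⟩ := hA x hx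
    refine ⟨comp S x, comp_sub S x, comp_conn S x, a, hax, b, hbx, ?_, ?_⟩
    · rw [mem_boxI, mul_assoc] at ha
      exact ha
    · rw [mem_boxI, mul_assoc] at hz
      have h1 := adj_dinf (adj_symm hbz)
      have h2 := dinf_tri z b 0
      omega
  obtain ⟨X₁, hX1, hc1, hp1⟩ := cm S₁ ha1
  obtain ⟨X₂, hX2, hc2, hp2⟩ := cm S₂ ha2
  rw [hS]
  refine good_of_br hκ hℓ hL₀ hok ?_
    ((link_shell hd e1 e2 e3 e4 z hD X₁ X₂ hc1 hc2 hp1 hp2).mono (fun x _ h => h) le_rfl hX1 hX2)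
  intro x hx
  rw [mem_boxI]
  have := mem_boxI.1 hx.1
  omega

theorem indep_prod {Ω : Type*} [MeasurableSpace Ω] {d ℓ₀ L₀ κ : ℕ} {P : Measure Ω}
    [IsProbabilityMeasure P]
    {F : V d → Set Ω} {H : ℕ → V d → Set Ω}
    (h1 : CondC1 d ℓ₀ L₀ P F H) (h2 : CondC2 d ℓ₀ L₀ κ P F H) (p : ℕ → ENNReal)
    (hp : ∀ j (w : V d), P (Ev F H j (lp ℓ₀ L₀ j w))ᶜ ≤ p j) (A : Finset (ℕ × V d))
    (hA : ∀ a ∈ A, ∀ b ∈ A, a.1 = b.1 → a.2 ≠ b.2 → κ ≤ 2 * dinf a.2 b.2) :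
    P (⋂ a ∈ A, (Ev F H a.1 (lp ℓ₀ L₀ a.1 a.2))ᶜ) ≤ ∏ a ∈ A, p a.1 := by
  classical
  set J := A.image Prod.fst with hJ
  set U : ℕ → Finset (V d) := fun j => (A.filter fun a => a.1 = j).image Prod.snd with hU
  have hmU : ∀ j w, w ∈ U j ↔ (j, w) ∈ A := by
    intro j w
    simp only [hU, Finset.mem_image, Finset.mem_filter]
    constructor
    · rintro ⟨a, ⟨ha, rfl⟩, rfl⟩; exact ha
    · intro h; exact ⟨(j, w), ⟨h, rfl⟩, rfl⟩
  have hlp : ∀ j (w : V d), lp ℓ₀ L₀ j w ∈ latt d ℓ₀ L₀ j := by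
    intro j w i
    refine ⟨w i, ?_⟩
    simp [lp]
  have e1 : (⋂ a ∈ A, (Ev F H a.1 (lp ℓ₀ L₀ a.1 a.2))ᶜ) =
      ⋂ j ∈ J, ⋂ w ∈ U j, (Ev F H j (lp ℓ₀ L₀ j w))ᶜ := by
    ext ω
    simp only [Set.mem_iInter]
    constructor
    · intro h j _ w hw
      exact h (j, w) ((hmU j w).1 hw)
    · intro h a ha
      exact h a.1 (Finset.mem_image_of_mem _ ha) a.2 ((hmU _ _).2 ha)
  have e2 : ∏ a ∈ A, p a.1 = ∏ j ∈ J, ∏ w ∈ U j, p j := by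
    rw [← Finset.prod_fiberwise_of_maps_to (s := A) (t := J) (g := Prod.fst)
      (fun a ha => Finset.mem_image_of_mem _ ha)]
    refine Finset.prod_congr rfl fun j _ => ?_
    rw [hU]
    dsimp only
    rw [Finset.prod_image]
    · refine Finset.prod_congr rfl fun a ha => ?_
      rw [(Finset.mem_filter.1 ha).2]
    · intro a ha b hb hab
      have ha' := (Finset.mem_filter.1 ha).2
      have hb' := (Finset.mem_filter.1 hb).2
      exact Prod.ext (ha'.trans hb'.symm) hab
  rw [e1, e2]
  have hmeas : ∀ j (w : V d), MeasurableSet[MeasurableSpace.generateFrom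
    (if j = 0 then {A | ∃ x ∈ latt d ℓ₀ L₀ 0, A = F x}
     else {A | ∃ x ∈ latt d ℓ₀ L₀ j, A = H j x})] (Ev F H j (lp ℓ₀ L₀ j w))ᶜ := by
    intro j w
    refine MeasurableSet.compl (MeasurableSpace.measurableSet_generateFrom ?_)
    by_cases hj : j = 0
    · subst hj
      simp only [Ev, if_true]
      exact ⟨_, hlp 0 w, rfl⟩
    · simp only [Ev, if_neg hj]
      exact ⟨_, hlp j w, rfl⟩
  have e3 := iIndep.meas_biInter h1 (S := J) (s := fun j => ⋂ w ∈ U j, (Ev F H j (lp ℓ₀ L₀ j w))ᶜ)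
    (fun j _ => Finset.measurableSet_biInter _ (fun w _ => hmeas j w))
  rw [e3]
  refine Finset.prod_le_prod' fun j _ => ?_
  have hi : iIndepSet (fun u : U j => Ev F H j (lp ℓ₀ L₀ j u.1)) P := by
    have := h2 (U j) (fun u hu v hv huv => hA (j, u) ((hmU _ _).1 hu) (j, v) ((hmU _ _).1 hv) rfl huv)
    by_cases hj : j = 0
    · subst hj
      exact this.1
    · have h3 := this.2 j (by omega)
      simp only [Ev, if_neg hj]
      exact h3
  have e4 := iIndep.meas_iInter (ι := U j) hi
    (s := fun u : U j => (Ev F H j (lp ℓ₀ L₀ j u.1))ᶜ)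
    (fun u => MeasurableSet.compl (MeasurableSpace.measurableSet_generateFrom rfl))
  have e5 : (⋂ w ∈ U j, (Ev F H j (lp ℓ₀ L₀ j w))ᶜ) =
      ⋂ u : U j, (Ev F H j (lp ℓ₀ L₀ j u.1))ᶜ := by
    ext ω
    simp
  rw [e5, e4]
  rw [← Finset.prod_coe_sort (U j)]
  exact Finset.prod_le_prod' fun u _ => hp j u.1

theorem bad_prob {Ω : Type*} [MeasurableSpace Ω] {d ℓ₀ L₀ κ : ℕ} {P : Measure Ω}
    [IsProbabilityMeasure P] (hd : 3 ≤ d) (hκ : 20 ≤ κ) (hℓ : 1000 ≤ ℓ₀) (hL₀ : 1 ≤ L₀)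
    {F : V d → Set Ω} {H : ℕ → V d → Set Ω}
    (h1 : CondC1 d ℓ₀ L₀ P F H) (h2 : CondC2 d ℓ₀ L₀ κ P F H) (p b : ℕ → ENNReal)
    (hp : ∀ j (w : V d), P (Ev F H j (lp ℓ₀ L₀ j w))ᶜ ≤ p j)
    (h0 : ((22 * κ + 1) ^ d : ℕ) * p 0 ≤ b 0)
    (hs : ∀ n, ((22 * κ + 1) ^ d : ℕ) * p (n + 1) +
      (((20 * κ * ℓ₀ + 1) ^ d) ^ 2 : ℕ) * (b n * b n) ≤ b (n + 1)) (n : ℕ) :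
    P {ω | ¬ Okc ℓ₀ L₀ κ F H n ω} ≤ b n + ∑' k : ℕ, ((22 * κ + 1) ^ d : ℕ) * p (n + 1 + k) := by
  have hsub : {ω | ¬ Okc ℓ₀ L₀ κ F H n ω} ⊆
      (⋃ A ∈ Tr ℓ₀ L₀ κ n (0 : V d), ⋂ a ∈ A, (Ev F H a.1 (lp ℓ₀ L₀ a.1 a.2))ᶜ) ∪
      ⋃ k : ℕ, ⋃ w ∈ near ℓ₀ L₀ κ (n + 1 + k) (0 : V d),
        (Ev F H (n + 1 + k) (lp ℓ₀ L₀ (n + 1 + k) w))ᶜ := by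
    intro ω hω
    by_contra hc
    apply hω
    rw [Set.mem_union, not_or] at hc
    refine ⟨?_, ?_⟩
    · rintro ⟨A, hA, h⟩
      apply hc.1
      refine Set.mem_biUnion hA ?_
      simp only [Set.mem_iInter]
      exact fun a ha => h a ha
    · intro j hj w hw
      obtain ⟨k, rfl⟩ : ∃ k, j = n + 1 + k := ⟨j - (n + 1), by omega⟩
      by_contra hh
      apply hc.2
      exact Set.mem_iUnion.2 ⟨k, Set.mem_biUnion hw hh⟩
  refine (measure_mono hsub).trans ((measure_union_le _ _).trans (add_le_add ?_ ?_))
  · refine (measure_biUnion_finset_le _ _).trans ?_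
    refine le_trans (Finset.sum_le_sum fun A hA => ?_) (Tr_sum hd hκ hℓ hL₀ p b h0 hs n 0)
    exact indep_prod h1 h2 p hp A (Tr_sep hd hκ hℓ hL₀ n 0 A hA)
  · refine (measure_iUnion_le _).trans (ENNReal.tsum_le_tsum fun k => ?_)
    refine (measure_biUnion_finset_le _ _).trans ?_
    refine (Finset.sum_le_card_nsmul _ _ (p (n + 1 + k)) fun w _ => hp _ w).trans ?_
    rw [nsmul_eq_mul, near_card]

theorem final_num {Ω : Type*} [MeasurableSpace Ω] {d ℓ₀ L₀ κ : ℕ} {P : Measure Ω}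
    [IsProbabilityMeasure P] (hd : 3 ≤ d) (hκ : 20 ≤ κ) (hℓ : 1000 ≤ ℓ₀) (hL₀ : 1 ≤ L₀)
    {F : V d → Set Ω} {H : ℕ → V d → Set Ω}
    (h1 : CondC1 d ℓ₀ L₀ P F H) (h2 : CondC2 d ℓ₀ L₀ κ P F H) (a c N₁ N₂ : ℝ)
    (hN₁ : N₁ = ((22 * κ + 1) ^ d : ℕ)) (hN₂ : N₂ = (((20 * κ * ℓ₀ + 1) ^ d) ^ 2 : ℕ))
    (ha : 2 * (N₂ * a) = 1) (hc : 2 * (N₁ * c) = a) (ha0 : 0 < a) (hc0 : 0 < c) (ha1 : a ≤ 1 / 2)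
    (hF : ∀ x ∈ latt d ℓ₀ L₀ 0, P (F x)ᶜ ≤ ENNReal.ofReal (c / 2))
    (hH : ∀ n : ℕ, 1 ≤ n → ∀ x ∈ latt d ℓ₀ L₀ n,
      P (H n x)ᶜ ≤ ENNReal.ofReal (c / 2 ^ 2 ^ n)) (n : ℕ) :
    P {ω | ¬ Okc ℓ₀ L₀ κ F H n ω} ≤ (1 / 2 : ENNReal) ^ 2 ^ n := by
  have hlp : ∀ j (w : V d), lp ℓ₀ L₀ j w ∈ latt d ℓ₀ L₀ j := by
    intro j w i
    refine ⟨w i, ?_⟩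
    simp [lp]
  have hN1p : 0 ≤ N₁ := by rw [hN₁]; positivity
  have hN2p : 0 ≤ N₂ := by rw [hN₂]; positivity
  have c1 : (((22 * κ + 1) ^ d : ℕ) : ENNReal) = ENNReal.ofReal N₁ := by
    rw [hN₁, ENNReal.ofReal_natCast]
  have c2 : ((((20 * κ * ℓ₀ + 1) ^ d) ^ 2 : ℕ) : ENNReal) = ENNReal.ofReal N₂ := by
    rw [hN₂, ENNReal.ofReal_natCast]
  have hmain := bad_prob hd hκ hℓ hL₀ h1 h2 (fun j => ENNReal.ofReal (c / 2 ^ 2 ^ j))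
    (fun j => ENNReal.ofReal (a / 2 ^ 2 ^ j)) ?_ ?_ ?_ n
  · refine hmain.trans ?_
    have hk : ∀ k : ℕ, (((22 * κ + 1) ^ d : ℕ) : ENNReal) * ENNReal.ofReal (c / 2 ^ 2 ^ (n + 1 + k)) ≤
        ENNReal.ofReal (a / 2 ^ 2 ^ n / 2) * 2⁻¹ ^ k := by
      intro k
      have e : (2⁻¹ : ENNReal) ^ k = ENNReal.ofReal ((1 / 2) ^ k) := by
        rw [ENNReal.ofReal_pow (by norm_num), one_div, ENNReal.ofReal_inv_of_pos (by norm_num)]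
        simp
      rw [c1, e, ← ENNReal.ofReal_mul hN1p, ← ENNReal.ofReal_mul (by positivity)]
      apply ENNReal.ofReal_le_ofReal
      have hpow : 2 ^ n + k ≤ 2 ^ (n + 1 + k) := by
        have q1 : 2 ^ (n + 1 + k) = 2 ^ n * 2 ^ (k + 1) := by rw [← pow_add]; congr 1; omega
        have q2 : k + 1 < 2 ^ (k + 1) := Nat.lt_two_pow_self
        have q3 : 1 ≤ 2 ^ n := Nat.one_le_two_pow
        rw [q1]
        nlinarith
      have q : (2 : ℝ) ^ 2 ^ n * 2 ^ k ≤ 2 ^ 2 ^ (n + 1 + k) := by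
        rw [← pow_add]
        exact pow_le_pow_right₀ (by norm_num) hpow
      have q' : N₁ * c = a / 2 := by linarith
      calc N₁ * (c / 2 ^ 2 ^ (n + 1 + k)) = a / 2 / 2 ^ 2 ^ (n + 1 + k) := by rw [← q']; ring
        _ ≤ a / 2 / ((2 : ℝ) ^ 2 ^ n * 2 ^ k) := by gcongr
        _ = _ := by
          rw [one_div, inv_pow]
          field_simp
    calc _ ≤ ENNReal.ofReal (a / 2 ^ 2 ^ n) + ∑' k : ℕ, ENNReal.ofReal (a / 2 ^ 2 ^ n / 2) * 2⁻¹ ^ k :=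
          add_le_add le_rfl (ENNReal.tsum_le_tsum hk)
      _ = ENNReal.ofReal (a / 2 ^ 2 ^ n) + ENNReal.ofReal (a / 2 ^ 2 ^ n / 2) * ENNReal.ofReal 2 := by
          rw [ENNReal.tsum_mul_left, ENNReal.tsum_geometric, ENNReal.one_sub_inv_two, inv_inv]
          simp
      _ = ENNReal.ofReal (2 * a / 2 ^ 2 ^ n) := by
          rw [← ENNReal.ofReal_mul (by positivity), ← ENNReal.ofReal_add (by positivity) (by positivity)]
          congr 1
          ring
      _ ≤ ENNReal.ofReal ((1 / 2) ^ 2 ^ n) := by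
          apply ENNReal.ofReal_le_ofReal
          rw [one_div, inv_pow, ← one_div]
          gcongr
          linarith
      _ = _ := by
          rw [ENNReal.ofReal_pow (by norm_num), one_div, ENNReal.ofReal_inv_of_pos (by norm_num)]
          simp
  · intro j w
    by_cases hj : j = 0
    · subst hj
      simpa [Ev] using hF _ (hlp 0 w)
    · simpa [Ev, hj] using hH j (by omega) _ (hlp j w)
  · rw [c1, ← ENNReal.ofReal_mul hN1p]
    apply ENNReal.ofReal_le_ofReal
    norm_num
    linarith
  · intro m
    rw [c1, c2, ← ENNReal.ofReal_mul hN1p, ← ENNReal.ofReal_mul (by positivity),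
      ← ENNReal.ofReal_mul hN2p, ← ENNReal.ofReal_add (by positivity) (by positivity)]
    apply ENNReal.ofReal_le_ofReal
    have q : (2 : ℝ) ^ 2 ^ (m + 1) = 2 ^ 2 ^ m * 2 ^ 2 ^ m := by
      rw [← pow_add]; congr 1; ring
    rw [q]
    have q0 : (0 : ℝ) < 2 ^ 2 ^ m := by positivity
    generalize (2 : ℝ) ^ 2 ^ m = x at *
    have : N₁ * (c / (x * x)) + N₂ * (a / x * (a / x)) = (N₁ * c + (N₂ * a) * a) / (x * x) := by
      field_simp
    rw [this]
    gcongr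
    nlinarith

/-- Corollary 2.7: existence of good `0`-bridges with overwhelming probability, for either
notion of admissibility. -/
theorem good_zero_bridges (d : ℕ) (hd : 3 ≤ d) (κ : ℕ) (hκ : 20 ≤ κ) :
    ∃ C : ℕ, ∀ ℓ₀ : ℕ, C ≤ ℓ₀ →
      ∃ K : ℕ, 100 ≤ K ∧ ∃ c₁ c₂ : ℝ, c₁ ∈ Set.Ioo (0 : ℝ) 1 ∧ c₂ ∈ Set.Ioo (0 : ℝ) 1 ∧
        ∃ C' : ℕ, ∀ L₀ : ℕ, C' ≤ L₀ →
          ∀ {Ω : Type} [MeasurableSpace Ω] (P : Measure Ω), IsProbabilityMeasure P →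
            ∀ (F : V d → Set Ω) (H : ℕ → V d → Set Ω),
              CondC1 d ℓ₀ L₀ P F H → CondC2 d ℓ₀ L₀ κ P F H →
              (∀ x ∈ latt d ℓ₀ L₀ 0, P (F x)ᶜ ≤ ENNReal.ofReal c₁) →
              (∀ n : ℕ, 1 ≤ n → ∀ x ∈ latt d ℓ₀ L₀ n,
                P (H n x)ᶜ ≤ ENNReal.ofReal (c₂ / 2 ^ 2 ^ n)) →
              ∀ n : ℕ,
                1 - (1 / 2 : ENNReal) ^ 2 ^ n ≤ P (G0EventI d ℓ₀ L₀ κ F H n) ∧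
                1 - (1 / 2 : ENNReal) ^ 2 ^ n ≤ P (G0EventII d ℓ₀ L₀ κ F H n) := by
  refine ⟨1000, fun ℓ₀ hℓ => ⟨100, le_rfl, ?_⟩⟩
  obtain ⟨N₁, hN₁⟩ : ∃ N₁ : ℝ, N₁ = ((22 * κ + 1) ^ d : ℕ) := ⟨_, rfl⟩
  obtain ⟨N₂, hN₂⟩ : ∃ N₂ : ℝ, N₂ = (((20 * κ * ℓ₀ + 1) ^ d) ^ 2 : ℕ) := ⟨_, rfl⟩
  have g1 : 1 ≤ N₁ := by
    rw [hN₁]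
    exact_mod_cast Nat.one_le_pow _ _ (by omega)
  have g2 : 1 ≤ N₂ := by
    rw [hN₂]
    exact_mod_cast Nat.one_le_pow _ _ (Nat.pow_pos (by omega))
  obtain ⟨a, ha⟩ : ∃ a : ℝ, a = 1 / (2 * N₂) := ⟨_, rfl⟩
  obtain ⟨c, hc⟩ : ∃ c : ℝ, c = a / (2 * N₁) := ⟨_, rfl⟩
  have ha0 : 0 < a := by rw [ha]; positivity
  have hc0 : 0 < c := by rw [hc]; positivity
  have ha' : 2 * (N₂ * a) = 1 := by rw [ha]; field_simp
  have hc' : 2 * (N₁ * c) = a := by rw [hc]; field_simp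
  have ha1 : a ≤ 1 / 2 := by nlinarith
  have hc1 : c ≤ 1 / 2 := by nlinarith
  refine ⟨c / 2, c, ⟨by linarith, by linarith⟩, ⟨by linarith, by linarith⟩, 1, ?_⟩
  intro L₀ hL₀ Ω _ P hP F H h1 h2 hF hH n
  have key := final_num hd hκ hℓ hL₀ h1 h2 a c N₁ N₂ hN₁ hN₂ ha' hc' ha0 hc0 ha1 hF hH n
  have fin : ∀ G : Set Ω, (∀ ω, Okc ℓ₀ L₀ κ F H n ω → ω ∈ G) →
      1 - (1 / 2 : ENNReal) ^ 2 ^ n ≤ P G := by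
    intro G hG
    rw [tsub_le_iff_right]
    calc (1 : ENNReal) = P Set.univ := measure_univ.symm
      _ ≤ P (G ∪ {ω | ¬ Okc ℓ₀ L₀ κ F H n ω}) := by
        refine measure_mono fun ω _ => ?_
        by_cases h : Okc ℓ₀ L₀ κ F H n ω
        · exact Or.inl (hG ω h)
        · exact Or.inr h
      _ ≤ P G + P {ω | ¬ Okc ℓ₀ L₀ κ F H n ω} := measure_union_le _ _
      _ ≤ _ := add_le_add le_rfl key
  exact ⟨fin _ fun ω h => ok_I hd hκ hℓ hL₀ h, fin _ fun ω h => ok_II hd hκ hℓ hL₀ h⟩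

end
end GFFperc
end

section
/- There exist constants c, C > 0 depending only on d such that for every ε > 0 and all integers L, R ≥ 1: P[|φ_x − φ^L_x| < ε for every x ∈ B_R] ≥ 1 − C R^d exp(−c ε² L^{(d−2)/2}). -/
open MeasureTheory ProbabilityTheory Filter Set

namespace GFFperc

noncomputable section

/-- Covariance of the truncated field `φ^L`. -/
def covTrunc (d L : ℕ) (x y : V d) : ℝ := (1 / 2) * ∑ ℓ ∈ Finset.range (L + 1), lazyP d ℓ x y

/-- Covariance of the tail field `φ - φ^L`. -/
def covTail (d L : ℕ) (x y : V d) : ℝ := (1 / 2) * ∑' ℓ : ℕ, lazyP d (ℓ + L + 1) x y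

/-- The truncated fields `φ^L` are coupled with `φ` so that, for each `L`, `φ^L` and
`φ - φ^L` are independent centered Gaussian fields with the stated covariances. -/
def IsTruncCoupling (d : ℕ) {Ω : Type*} [MeasurableSpace Ω] (P : Measure Ω)
    (φ : V d → Ω → ℝ) (φL : ℕ → V d → Ω → ℝ) : Prop :=
  ∀ L : ℕ, IsCGF P (φL L) (covTrunc d L) ∧
    IsCGF P (fun x ω => φ x ω - φL L x ω) (covTail d L) ∧
    IndepFun (proc (φL L)) (proc fun x ω => φ x ω - φL L x ω) P

/-- One-dimensional base measure. -/
def nu : Measure ℝ := volume.restrict (Ioc (-Real.pi) Real.pi)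

instance : IsFiniteMeasure nu := by unfold nu; infer_instance

/-- Symbol of the lazy walk. -/
def sym (d : ℕ) (θ : Fin d → ℝ) : ℝ := 1 / 2 + (1 / (2 * d)) * ∑ i, Real.cos (θ i)

/-- Unnormalised Fourier integral. -/
def Fint (d ℓ : ℕ) (z : V d) : ℝ :=
  ∫ θ : Fin d → ℝ, sym d θ ^ ℓ * ∏ i, Real.cos (θ i * z i) ∂(Measure.pi fun _ => nu)

lemma sym_nonneg {d : ℕ} (hd : 0 < d) (θ : Fin d → ℝ) : 0 ≤ sym d θ := by
  have hd' : (0 : ℝ) < d := by exact_mod_cast hd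
  have h : -(d : ℝ) ≤ ∑ i, Real.cos (θ i) := by
    have := Finset.sum_le_sum (s := Finset.univ) (fun i (_ : i ∈ Finset.univ) => Real.neg_one_le_cos (θ i))
    simpa using this
  unfold sym
  have : 1 / (2 * (d : ℝ)) * (-(d : ℝ)) ≤ 1 / (2 * (d : ℝ)) * ∑ i, Real.cos (θ i) := by gcongr
  have h2 : 1 / (2 * (d : ℝ)) * (-(d : ℝ)) = -(1 / 2) := by field_simp
  linarith

lemma sym_le_exp {d : ℕ} (hd : 0 < d) (θ : Fin d → ℝ) :
    sym d θ ≤ Real.exp (∑ i, (-(1 / (2 * d)) * (1 - Real.cos (θ i)))) := by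
  have hd' : (0 : ℝ) < d := by exact_mod_cast hd
  refine le_trans (le_of_eq ?_) (Real.add_one_le_exp _)
  rw [← Finset.mul_sum, Finset.sum_sub_distrib]
  simp [sym]
  field_simp
  ring

lemma sym_le_one {d : ℕ} (hd : 0 < d) (θ : Fin d → ℝ) : sym d θ ≤ 1 := by
  refine (sym_le_exp hd θ).trans ?_
  rw [Real.exp_le_one_iff]
  refine Finset.sum_nonpos fun i _ => ?_
  have := Real.cos_le_one (θ i)
  have h2 : (0 : ℝ) ≤ 1 / (2 * d) := by positivity
  nlinarith

lemma continuous_sym (d : ℕ) : Continuous (sym d) := by unfold sym; fun_prop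

lemma integrable_F {d : ℕ} (hd : 0 < d) (ℓ : ℕ) (z : V d) :
    Integrable (fun θ : Fin d → ℝ => sym d θ ^ ℓ * ∏ i, Real.cos (θ i * z i))
      (Measure.pi fun _ => nu) := by
  refine Integrable.of_bound (C := 1) ?_ (ae_of_all _ fun θ => ?_)
  · have := continuous_sym d
    exact Continuous.aestronglyMeasurable (by fun_prop)
  · rw [norm_mul, norm_pow, norm_prod, Real.norm_of_nonneg (sym_nonneg hd θ)]
    refine mul_le_one₀ (pow_le_one₀ (sym_nonneg hd θ) (sym_le_one hd θ))
      (Finset.prod_nonneg fun _ _ => norm_nonneg _)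
      (Finset.prod_le_one (fun _ _ => norm_nonneg _) fun i _ => ?_)
    exact Real.abs_cos_le_one _

lemma prod_cos {d : ℕ} (θ : Fin d → ℝ) (z : V d) (i : Fin d) :
    (∏ j, Real.cos (θ j * ((z + unitV d i) j : ℤ))) + (∏ j, Real.cos (θ j * ((z - unitV d i) j : ℤ)))
      = 2 * Real.cos (θ i) * ∏ j, Real.cos (θ j * z j) := by
  rw [← Finset.mul_prod_erase _ _ (Finset.mem_univ i), ← Finset.mul_prod_erase _ (fun j => Real.cos (θ j * ((z - unitV d i) j : ℤ))) (Finset.mem_univ i), ← Finset.mul_prod_erase _ (fun j => Real.cos (θ j * z j)) (Finset.mem_univ i)]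
  have h1 : ∏ j ∈ Finset.univ.erase i, Real.cos (θ j * ((z + unitV d i) j : ℤ))
      = ∏ j ∈ Finset.univ.erase i, Real.cos (θ j * z j) := by
    refine Finset.prod_congr rfl fun j hj => ?_
    simp [unitV, Finset.ne_of_mem_erase hj]
  have h2 : ∏ j ∈ Finset.univ.erase i, Real.cos (θ j * ((z - unitV d i) j : ℤ))
      = ∏ j ∈ Finset.univ.erase i, Real.cos (θ j * z j) := by
    refine Finset.prod_congr rfl fun j hj => ?_
    simp [unitV, Finset.ne_of_mem_erase hj]
  rw [h1, h2]
  simp only [unitV, Pi.add_apply, Pi.sub_apply, if_true]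
  push_cast
  rw [mul_add, mul_sub, Real.cos_add, Real.cos_sub, mul_one]
  ring

lemma F_succ {d : ℕ} (hd : 0 < d) (ℓ : ℕ) (z : V d) :
    Fint d (ℓ + 1) z = (1 / 2) * Fint d ℓ z +
      (1 / (4 * d)) * ∑ i : Fin d, (Fint d ℓ (z + unitV d i) + Fint d ℓ (z - unitV d i)) := by
  unfold Fint
  simp_rw [← integral_add (integrable_F hd ℓ _) (integrable_F hd ℓ _)]
  have hI : ∀ i ∈ (Finset.univ : Finset (Fin d)), Integrable (fun a : Fin d → ℝ =>
      sym d a ^ ℓ * ∏ j, Real.cos (a j * ((z + unitV d i) j : ℤ)) +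
        sym d a ^ ℓ * ∏ j, Real.cos (a j * ((z - unitV d i) j : ℤ))) (Measure.pi fun _ => nu) :=
    fun i _ => (integrable_F hd ℓ _).add (integrable_F hd ℓ _)
  rw [← integral_finsetSum _ hI, ← integral_const_mul, ← integral_const_mul, ← integral_add]
  · congr 1
    ext θ
    simp_rw [← mul_add, prod_cos, pow_succ]
    rw [← Finset.mul_sum, ← Finset.sum_mul, ← Finset.mul_sum]
    have hd' : (d : ℝ) ≠ 0 := by exact_mod_cast hd.ne'
    nth_rewrite 2 [sym]
    field_simp
    ring
  · exact (integrable_F hd ℓ _).const_mul _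
  · exact (integrable_finsetSum _ hI).const_mul _

lemma int_cos (n : ℤ) : ∫ t, Real.cos (t * n) ∂nu = if n = 0 then 2 * Real.pi else 0 := by
  have hp := Real.pi_pos
  unfold nu
  rw [← intervalIntegral.integral_of_le (by linarith)]
  split_ifs with h
  · subst h
    simp
    ring
  · have hn : (n : ℝ) ≠ 0 := by exact_mod_cast h
    rw [intervalIntegral.integral_comp_mul_right _ hn, integral_cos]
    rw [neg_mul, Real.sin_neg, mul_comm, Real.sin_int_mul_pi]
    simp

lemma F_zero (d : ℕ) (z : V d) :
    Fint d 0 z = if z = 0 then (2 * Real.pi) ^ d else 0 := by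
  unfold Fint
  simp only [pow_zero, one_mul]
  rw [integral_fintype_prod_eq_prod (f := fun i t => Real.cos (t * z i))]
  simp_rw [int_cos]
  split_ifs with h
  · subst h; simp
  · obtain ⟨i, hi⟩ := Function.ne_iff.1 h
    exact Finset.prod_eq_zero (Finset.mem_univ i) (by simpa using hi)

lemma lazy_eq {d : ℕ} (hd : 0 < d) (ℓ : ℕ) (x y : V d) :
    (2 * Real.pi) ^ d * lazyP d ℓ x y = Fint d ℓ (x - y) := by
  induction ℓ generalizing x with
  | zero => rw [F_zero]; simp [lazyP, sub_eq_zero]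
  | succ ℓ ih =>
    rw [F_succ hd, lazyP, ← ih]
    have h1 : ∀ i, x - y + unitV d i = (x + unitV d i) - y := fun i => by abel
    have h2 : ∀ i, x - y - unitV d i = (x - unitV d i) - y := fun i => by abel
    simp_rw [h1, h2, ← ih, ← mul_add]
    rw [← Finset.mul_sum]
    ring

lemma lazy_nonneg (d ℓ : ℕ) (x y : V d) : 0 ≤ lazyP d ℓ x y := by
  induction ℓ generalizing x with
  | zero => simp only [lazyP]; split_ifs <;> norm_num
  | succ ℓ ih =>
    rw [lazyP]
    have : 0 ≤ ∑ i : Fin d, (lazyP d ℓ (x + unitV d i) y + lazyP d ℓ (x - unitV d i) y) :=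
      Finset.sum_nonneg fun i _ => add_nonneg (ih _) (ih _)
    have := ih x
    positivity

lemma int_exp_le {a : ℝ} (ha : 0 < a) :
    ∫ t, Real.exp (-a * (1 - Real.cos t)) ∂nu ≤ √(Real.pi / (a * (2 / Real.pi ^ 2))) := by
  have hp := Real.pi_pos
  have hb : 0 < a * (2 / Real.pi ^ 2) := by positivity
  rw [← integral_gaussian]
  have hi := integrable_exp_neg_mul_sq hb
  refine le_trans ?_ (setIntegral_le_integral (s := Ioc (-Real.pi) Real.pi) hi (ae_of_all _ fun t => (Real.exp_pos _).le))
  unfold nu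
  refine setIntegral_mono_on ?_ hi.integrableOn measurableSet_Ioc ?_
  · refine Integrable.of_bound (C := 1) (Continuous.aestronglyMeasurable (by fun_prop)) (ae_of_all _ fun t => ?_)
    rw [Real.norm_of_nonneg (Real.exp_pos _).le, Real.exp_le_one_iff]
    nlinarith [Real.cos_le_one t]
  · intro t ht
    have := Real.cos_le_one_sub_mul_cos_sq (x := t) (abs_le.2 ⟨ht.1.le, ht.2⟩)
    apply Real.exp_le_exp.2
    nlinarith

lemma F_le {d : ℕ} (hd : 0 < d) (ℓ : ℕ) (hℓ : 0 < ℓ) :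
    Fint d ℓ 0 ≤ √(Real.pi / (ℓ / (2 * d) * (2 / Real.pi ^ 2))) ^ d := by
  have hd' : (0 : ℝ) < d := by exact_mod_cast hd
  have hl' : (0 : ℝ) < ℓ := by exact_mod_cast hℓ
  have ha : (0 : ℝ) < ℓ / (2 * d) := by positivity
  have h1 : Fint d ℓ 0 ≤ ∫ θ : Fin d → ℝ, ∏ i, Real.exp (-(ℓ / (2 * d)) * (1 - Real.cos (θ i)))
      ∂(Measure.pi fun _ => nu) := by
    unfold Fint
    refine integral_mono (integrable_F hd ℓ 0) ?_ fun θ => ?_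
    · refine Integrable.of_bound (C := 1) (Continuous.aestronglyMeasurable (by fun_prop)) (ae_of_all _ fun t => ?_)
      rw [norm_prod]
      refine Finset.prod_le_one (fun _ _ => norm_nonneg _) fun i _ => ?_
      rw [Real.norm_of_nonneg (Real.exp_pos _).le, Real.exp_le_one_iff]
      nlinarith [Real.cos_le_one (t i)]
    · simp only [Pi.zero_apply, Int.cast_zero, mul_zero, Real.cos_zero, Finset.prod_const_one, mul_one]
      refine (pow_le_pow_left₀ (sym_nonneg hd θ) (sym_le_exp hd θ) ℓ).trans (le_of_eq ?_)
      rw [← Real.exp_nat_mul, ← Real.exp_sum, Finset.mul_sum]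
      congr 1
      refine Finset.sum_congr rfl fun i _ => ?_
      ring
  refine h1.trans ?_
  rw [integral_fintype_prod_eq_prod (f := fun (_ : Fin d) t => Real.exp (-(ℓ / (2 * d)) * (1 - Real.cos t)))]
  refine (Finset.prod_le_prod (fun i _ => integral_nonneg fun t => (Real.exp_pos _).le)
    (fun i _ => int_exp_le ha)).trans (le_of_eq ?_)
  simp

lemma lazy_le {d : ℕ} (hd : 0 < d) :
    ∃ K : ℝ, 0 < K ∧ ∀ ℓ : ℕ, 0 < ℓ → ∀ x, lazyP d ℓ x x ≤ K * (ℓ : ℝ) ^ (-((d : ℝ) / 2)) := by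
  have hp := Real.pi_pos
  have hd' : (0 : ℝ) < d := by exact_mod_cast hd
  refine ⟨√(Real.pi ^ 3 * d) ^ d / (2 * Real.pi) ^ d, by positivity, fun ℓ hℓ x => ?_⟩
  have hl' : (0 : ℝ) < ℓ := by exact_mod_cast hℓ
  have h := lazy_eq hd ℓ x x
  rw [sub_self] at h
  have h2 := F_le hd ℓ hℓ
  rw [← h] at h2
  have h3 : √(Real.pi / (ℓ / (2 * d) * (2 / Real.pi ^ 2))) ^ d
      = √(Real.pi ^ 3 * d) ^ d * (ℓ : ℝ) ^ (-((d : ℝ) / 2)) := by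
    have : Real.pi / (ℓ / (2 * d) * (2 / Real.pi ^ 2)) = (Real.pi ^ 3 * d) * (ℓ : ℝ)⁻¹ := by
      field_simp
    rw [this, Real.sqrt_mul (by positivity), mul_pow]
    congr 1
    rw [Real.sqrt_inv, Real.sqrt_eq_rpow, ← Real.rpow_neg hl'.le, ← Real.rpow_natCast, ← Real.rpow_mul hl'.le]
    congr 1
    ring
  rw [h3] at h2
  rw [div_mul_eq_mul_div, le_div_iff₀ (by positivity)]
  linarith

lemma step_ineq {a n : ℝ} (ha : 0 < a) (hn : 0 < n) :
    a * (n + 1) ^ (-(a + 1)) ≤ n ^ (-a) - (n + 1) ^ (-a) := by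
  have hn1 : 0 < n + 1 := by linarith
  have h1 : (n + 1) ^ (-(a + 1)) = (n + 1) ^ (-a) / (n + 1) := by
    rw [neg_add, Real.rpow_add hn1, Real.rpow_neg_one]; rfl
  have h2 : n ^ (-a) = (n + 1) ^ (-a) * (n / (n + 1)) ^ (-a) := by
    rw [← Real.mul_rpow hn1.le (by positivity)]
    congr 1
    field_simp
  have h3 : 1 + a / (n + 1) ≤ (n / (n + 1)) ^ (-a) := by
    have hq : 0 < n / (n + 1) := by positivity
    rw [Real.rpow_def_of_pos hq]
    have := Real.log_le_sub_one_of_pos hq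
    have h4 : n / (n + 1) - 1 = -(1 / (n + 1)) := by field_simp; ring
    rw [h4] at this
    have h5 := Real.add_one_le_exp (Real.log (n / (n + 1)) * -a)
    have h6 : a / (n + 1) = a * (1 / (n + 1)) := by ring
    rw [h6]
    nlinarith
  have hpos : 0 < (n + 1) ^ (-a) := Real.rpow_pos_of_pos hn1 _
  rw [h1, h2]
  have := mul_le_mul_of_nonneg_left h3 hpos.le
  have h7 : a * ((n + 1) ^ (-a) / (n + 1)) = (n + 1) ^ (-a) * (a / (n + 1)) := by ring
  rw [h7]
  linarith

lemma tail_le {d : ℕ} (hd : 3 ≤ d) :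
    ∃ K : ℝ, 0 < K ∧ ∀ L : ℕ, 1 ≤ L → ∀ x,
      covTail d L x x ≤ K * (L : ℝ) ^ (-(((d : ℝ) - 2) / 2)) := by
  obtain ⟨K, hK, h⟩ := lazy_le (d := d) (by omega)
  have hd' : (3 : ℝ) ≤ d := by exact_mod_cast hd
  set a : ℝ := ((d : ℝ) - 2) / 2 with ha_def
  have ha : 0 < a := by rw [ha_def]; linarith
  refine ⟨K / a, by positivity, fun L hL x => ?_⟩
  have hL' : (0 : ℝ) < L := by exact_mod_cast hL
  have key : ∀ N : ℕ, ∑ ℓ ∈ Finset.range N, lazyP d (ℓ + L + 1) x x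
      ≤ K / a * ((L : ℝ) ^ (-a) - ((N + L : ℕ) : ℝ) ^ (-a)) := by
    intro N
    induction N with
    | zero => simp
    | succ N ih =>
      rw [Finset.sum_range_succ]
      have h1 := h (N + L + 1) (by omega) x
      have hn : (0 : ℝ) < ((N + L : ℕ) : ℝ) := by exact_mod_cast (by omega : 0 < N + L)
      have h2 := step_ineq ha hn
      have e1 : ((N + L + 1 : ℕ) : ℝ) = ((N + L : ℕ) : ℝ) + 1 := by push_cast; ring
      have e2 : ((N + 1 + L : ℕ) : ℝ) = ((N + L : ℕ) : ℝ) + 1 := by push_cast; ring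
      have e3 : -((d : ℝ) / 2) = -(a + 1) := by rw [ha_def]; ring
      rw [e1, e3] at h1
      rw [e2]
      have h3 := mul_le_mul_of_nonneg_left h2 (by positivity : 0 ≤ K / a)
      have e4 : K / a * (a * (((N + L : ℕ) : ℝ) + 1) ^ (-(a + 1))) = K * (((N + L : ℕ) : ℝ) + 1) ^ (-(a + 1)) := by
        field_simp
      rw [e4] at h3
      linarith
  have hs : ∑' ℓ : ℕ, lazyP d (ℓ + L + 1) x x ≤ K / a * (L : ℝ) ^ (-a) := by
    refine Real.tsum_le_of_sum_range_le (fun n => lazy_nonneg _ _ _ _) fun N => (key N).trans ?_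
    gcongr
    have : (0 : ℝ) ≤ ((N + L : ℕ) : ℝ) ^ (-a) := by positivity
    linarith
  have h0 : 0 ≤ K / a * (L : ℝ) ^ (-a) := by positivity
  unfold covTail
  linarith

lemma gauss_tail {Ω : Type*} [MeasurableSpace Ω] (P : Measure Ω) [IsProbabilityMeasure P]
    (X : Ω → ℝ) (v : ℝ) (K : ℝ) (hK : 0 < K) (hv : v ≤ K)
    (hX : P.map X = gaussianReal 0 v.toNNReal) (ε : ℝ) (hε : 0 < ε) :
    P {ω | ε ≤ |X ω|} ≤ ENNReal.ofReal (2 * Real.exp (-ε ^ 2 / (2 * K))) := by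
  have hs : HasSubgaussianMGF X K.toNNReal P := by
    refine ⟨fun t => ?_, fun t => ?_⟩
    · rw [← mgf_pos_iff, mgf_gaussianReal hX]
      exact Real.exp_pos _
    · rw [mgf_gaussianReal hX, zero_mul, zero_add]
      gcongr
  have h1 := hs.measure_ge_le hε.le
  have h2 := hs.neg.measure_ge_le hε.le
  rw [Real.coe_toNNReal _ hK.le] at h1 h2
  have hsub : {ω | ε ≤ |X ω|} ⊆ {ω | ε ≤ X ω} ∪ {ω | ε ≤ (-X) ω} := by
    intro ω h
    have h' : ε ≤ |X ω| := h
    rcases le_abs.1 h' with h1 | h1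
    · exact Or.inl h1
    · exact Or.inr h1
  rw [← ofReal_measureReal]
  apply ENNReal.ofReal_le_ofReal
  have := (measureReal_mono (μ := P) hsub).trans (measureReal_union_le _ _)
  linarith

/-- Lemma 3.2: uniform closeness of `φ` and `φ^L` on a box. -/
theorem phi_close_to_truncation (d : ℕ) (hd : 3 ≤ d) :
    ∃ c C : ℝ, 0 < c ∧ 0 < C ∧
      ∀ {Ω : Type} [MeasurableSpace Ω] (P : Measure Ω), IsProbabilityMeasure P →
        ∀ (φ : V d → Ω → ℝ) (φL : ℕ → V d → Ω → ℝ),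
          IsGFF P φ → IsTruncCoupling d P φ φL →
          ∀ ε : ℝ, 0 < ε → ∀ L R : ℕ, 1 ≤ L → 1 ≤ R →
            ENNReal.ofReal
                (1 - C * (R : ℝ) ^ d *
                  Real.exp (-c * ε ^ 2 * (L : ℝ) ^ (((d : ℝ) - 2) / 2))) ≤
              P {ω | ∀ x ∈ box d (R : ℝ), |φ x ω - φL L x ω| < ε} := by
  obtain ⟨K, hK, hT⟩ := tail_le hd
  refine ⟨1 / (2 * K), 2 * 3 ^ d, by positivity, by positivity, ?_⟩
  intro Ω _ P hP φ φL _ hC ε hε L R hL hR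
  have hL' : (0 : ℝ) < L := by exact_mod_cast hL
  have hR' : (1 : ℝ) ≤ R := by exact_mod_cast hR
  obtain ⟨_, ⟨hm, hG⟩, _⟩ := hC L
  set a : ℝ := ((d : ℝ) - 2) / 2 with ha_def
  have hLa : 0 < (L : ℝ) ^ (-a) := Real.rpow_pos_of_pos hL' _
  set E : ℝ := Real.exp (-(1 / (2 * K)) * ε ^ 2 * (L : ℝ) ^ a) with hE
  have hpt : ∀ x, P {ω | ε ≤ |φ x ω - φL L x ω|} ≤ ENNReal.ofReal (2 * E) := by
    intro x
    have hg := hG {x} (fun _ => 1)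
    simp only [Finset.sum_singleton, one_mul] at hg
    have := gauss_tail P _ _ (K * (L : ℝ) ^ (-a)) (by positivity) (hT L hL x) hg ε hε
    refine this.trans (le_of_eq ?_)
    rw [hE, Real.rpow_neg hL'.le]
    congr 3
    have : 0 < (L : ℝ) ^ a := Real.rpow_pos_of_pos hL' _
    field_simp
  set A : Set Ω := {ω | ∀ x ∈ box d (R : ℝ), |φ x ω - φL L x ω| < ε} with hA
  let S : Finset (V d) := Fintype.piFinset fun _ => Finset.Icc (-(R : ℤ)) R
  have hbox : ∀ x ∈ box d (R : ℝ), x ∈ S := by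
    intro x hx
    simp only [S, Fintype.mem_piFinset, Finset.mem_Icc]
    intro i
    have := hx i
    simp only [Pi.zero_apply, Int.cast_zero, sub_zero] at this
    rw [← abs_le]
    exact_mod_cast this
  have hcard : (S.card : ℝ) ≤ 3 ^ d * (R : ℝ) ^ d := by
    have : S.card = (2 * R + 1) ^ d := by
      simp only [S, Fintype.card_piFinset, Int.card_Icc, Finset.prod_const, Finset.card_univ,
        Fintype.card_fin]
      congr 1
      omega
    rw [this, ← mul_pow]
    push_cast
    gcongr
    linarith
  have hcompl : Aᶜ ⊆ ⋃ x ∈ S, {ω | ε ≤ |φ x ω - φL L x ω|} := by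
    intro ω hω
    simp only [hA, mem_compl_iff, mem_ofPred_eq, not_forall, not_lt] at hω
    obtain ⟨x, hx, h⟩ := hω
    simp only [mem_iUnion]
    exact ⟨x, hbox x hx, h⟩
  have hPc : P Aᶜ ≤ ENNReal.ofReal (2 * 3 ^ d * (R : ℝ) ^ d * E) := by
    calc P Aᶜ ≤ ∑ x ∈ S, P {ω | ε ≤ |φ x ω - φL L x ω|} :=
          (measure_mono hcompl).trans (measure_biUnion_finset_le _ _)
      _ ≤ ∑ x ∈ S, ENNReal.ofReal (2 * E) := Finset.sum_le_sum fun x _ => hpt x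
      _ = ENNReal.ofReal (S.card * (2 * E)) := by
          rw [Finset.sum_const, nsmul_eq_mul, ENNReal.ofReal_mul (Nat.cast_nonneg S.card),
            ENNReal.ofReal_natCast]
      _ ≤ _ := by
          apply ENNReal.ofReal_le_ofReal
          have hEp : 0 ≤ 2 * E := by positivity
          have := mul_le_mul_of_nonneg_right hcard hEp
          linarith
  rw [ENNReal.ofReal_sub _ (by positivity), ENNReal.ofReal_one, tsub_le_iff_right]
  calc (1 : ENNReal) = P (A ∪ Aᶜ) := by rw [union_compl_self, measure_univ]
    _ ≤ P A + P Aᶜ := measure_union_le _ _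
    _ ≤ _ := by gcongr

end
end GFFperc
end
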